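/- arXiv:1005.0038 — 5 statements merged into one kernel-verified Lean document; each statement's English description precedes it below -/
import Mathlib

section
/- Suppose a family (λ_k)_{k∈-ℕ} of Borel probability measures on S satisfies the convolution equation λ_k = μ_k * λ_{k-1} for every k ∈ -ℕ. Then there exists a solution {X,N} of Tsirelson's equation with noise law μ, unique up to identity in law, such that for each k ∈ -ℕ, X_k has law λ_k. -/
open MeasureTheory ProbabilityTheory Filter Topology
open scoped NNReal ENNReal

universe u v w w₂

noncomputable section

/-- The sub-σ-field generated by the process `Y` from index `k` on; since index `j : ℕ`
stands for time `-j`, this is the σ-field of the past `σ(Y_j : j ≤ -k)`. -/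
def past {Ω α : Type*} [MeasurableSpace α] (Y : ℕ → Ω → α) (k : ℕ) : MeasurableSpace Ω :=
  ⨆ j ≥ k, MeasurableSpace.comap (Y j) inferInstance

/-- A solution of Tsirelson's equation with noise law `μ`.  The index `k : ℕ` stands for the
time `-k ∈ -ℕ`, so that time `k - 1` corresponds to index `k + 1`. -/
structure IsSolution {Ω S G : Type*} [MeasurableSpace Ω] [MeasurableSpace S] [MeasurableSpace G]
    [SMul G S] (P : Measure Ω) (μ : ℕ → Measure G)
    (X : ℕ → Ω → S) (N : ℕ → Ω → G) : Prop where
  measurable_X : ∀ k, Measurable (X k)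
  measurable_N : ∀ k, Measurable (N k)
  eqn : ∀ k, X k =ᵐ[P] fun ω => N k ω • X (k + 1) ω
  indep : ∀ k, Indep (MeasurableSpace.comap (N k) inferInstance)
      (past X (k + 1) ⊔ past N (k + 1)) P
  law_N : ∀ k, P.map (N k) = μ k

/-- The joint law of `(X, N)` on the path space `S^{-ℕ} × Σ^{-ℕ}`. -/
def jointLaw {Ω S G : Type*} [MeasurableSpace Ω] [MeasurableSpace S] [MeasurableSpace G]
    (P : Measure Ω) (X : ℕ → Ω → S) (N : ℕ → Ω → G) : Measure ((ℕ → S) × (ℕ → G)) :=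
  P.map fun ω => (fun k => X k ω, fun k => N k ω)

/-- A solution is strong if each `X k` is a.s. equal to a `past N k`-measurable function,
i.e. `X k` is measurable for the `P`-completion of `σ(N_j : j ≤ -k)`. -/
def IsStrong {Ω S G : Type*} [MeasurableSpace Ω] [MeasurableSpace S] [MeasurableSpace G]
    (P : Measure Ω) (X : ℕ → Ω → S) (N : ℕ → Ω → G) : Prop :=
  ∀ k, ∃ Y : Ω → S, Measurable[past N k] Y ∧ X k =ᵐ[P] Y

/-- Triviality of the tail σ-field `⨅ k, m k`. -/
def TailTrivial {Ω : Type*} [MeasurableSpace Ω] (P : Measure Ω)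
    (m : ℕ → MeasurableSpace Ω) : Prop :=
  ∀ A : Set Ω, MeasurableSet[⨅ k, m k] A → P A = 0 ∨ P A = 1

/-- Convolution `μ * ν` of a measure on the acting semigroup with a measure on the space:
the pushforward of `μ ⊗ ν` under the action map. -/
def conv {G S : Type*} [MeasurableSpace G] [MeasurableSpace S] [SMul G S]
    (μ : Measure G) (ν : Measure S) : Measure S :=
  (μ.prod ν).map fun p => p.1 • p.2

/-- Convolution of two measures on the semigroup. -/
def convG {G : Type*} [MeasurableSpace G] [Mul G] (μ ν : Measure G) : Measure G :=
  (μ.prod ν).map fun p => p.1 * p.2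

/-- `prodN N n j = N_n · N_{n+1} · ⋯ · N_{n+j}`; in the time-indexing of the paper (index `m`
is time `-m`) this is `N_{k,l}` with `k = -n` and `l = -(n+j)-1 → -∞` as `j → ∞`. -/
def prodN {Ω G : Type*} [Mul G] (N : ℕ → Ω → G) (n : ℕ) : ℕ → Ω → G
  | 0 => N n
  | j + 1 => fun ω => prodN N n j ω * N (n + j + 1) ω

/-- `convIter μ n j = μ_n * μ_{n+1} * ⋯ * μ_{n+j}`, the law analogue of `prodN`. -/
def convIter {G : Type*} [MeasurableSpace G] [Mul G] (μ : ℕ → Measure G) (n : ℕ) :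
    ℕ → Measure G
  | 0 => μ n
  | j + 1 => convG (convIter μ n j) (μ (n + j + 1))

/-- `sigPow G n` is `Σ^{n+1}`, the set of products of `n+1` elements of `Σ = G`. -/
def sigPow (G : Type*) [Mul G] : ℕ → Set G
  | 0 => Set.univ
  | n + 1 => Set.image2 (· * ·) (sigPow G n) Set.univ

/-- Two sub-σ-fields are equal up to `P`-null sets. -/
def EqModNull {Ω : Type*} [MeasurableSpace Ω] (P : Measure Ω)
    (m₁ m₂ : MeasurableSpace Ω) : Prop :=
  (∀ A, MeasurableSet[m₁] A → ∃ B, MeasurableSet[m₂] B ∧ P (symmDiff A B) = 0) ∧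
  (∀ B, MeasurableSet[m₂] B → ∃ A, MeasurableSet[m₁] A ∧ P (symmDiff A B) = 0)

end

section Tsirelson

variable {S : Type u} {G : Type v}
  [TopologicalSpace S] [CompactSpace S] [TopologicalSpace.MetrizableSpace S]
  [SecondCountableTopology S] [MeasurableSpace S] [BorelSpace S]
  [TopologicalSpace G] [CompactSpace G] [TopologicalSpace.MetrizableSpace G]
  [SecondCountableTopology G] [MeasurableSpace G] [BorelSpace G]
  [Semigroup G] [ContinuousMul G]
  [SMul G S] [ContinuousSMul G S] [IsScalarTower G G S]

/-!
Existence. Disintegrating `μ k ⊗ λ (k + 1)` along the action `(g, x) ↦ g • x`, whose image law is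
`λ k`, and realizing the conditional law with a uniform random variable recovers a noise term and
the previous position from the current position. Carrying a fresh uniform variable along with the
previous position makes this a measure-preserving map `λ k ⊗ vol → μ k ⊗ (λ (k + 1) ⊗ vol)`;
iterating these maps into the past from time `0` yields a solution on the single space `α × [0, 1]`.

Uniqueness. By the equation, the path of a solution between two times is a fixed function of its
initial position and the subsequent noise terms. These are independent with prescribed laws, so
all finite-dimensional laws are determined.
-/

section UnitIntervalRandomization

open unitInterval

variable {E β : Type*} [MeasurableSpace E] [MeasurableSpace β]

theorem map_prodMk_prod_eq_compProd (ν : Measure β) [SFinite ν] (κ : Kernel β E)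
    [IsSFiniteKernel κ] {R : Type*} [MeasurableSpace R] (τ : Measure R) [SFinite τ]
    {F : β → R → E} (hF : Measurable (Function.uncurry F)) (hκ : ∀ b, τ.map (F b) = κ b) :
    (ν.prod τ).map (fun p => (p.1, F p.1 p.2)) = ν ⊗ₘ κ := by
  ext s hs
  have hgraph : Measurable fun p : β × R => (p.1, F p.1 p.2) := measurable_fst.prodMk hF
  rw [Measure.map_apply hgraph hs, Measure.prod_apply (hgraph hs), Measure.compProd_apply hs]
  refine lintegral_congr fun b => ?_
  rw [← hκ b, Measure.map_apply hF.of_uncurry_left (measurable_prodMk_left hs)]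
  rfl

theorem exists_measurePreserving_section_of_prod_unitInterval [StandardBorelSpace E] [Nonempty E]
    [MeasurableEq β] (ρ : Measure E) [IsProbabilityMeasure ρ] {f : E → β} (hf : Measurable f) :
    ∃ T : β × I → E, MeasurePreserving T ((ρ.map f).prod volume) ρ ∧
      ∀ᵐ p ∂(ρ.map f).prod volume, f (T p) = p.1 := by
  obtain ⟨F, hF, hFκ⟩ :=
    (condDistrib (id : E → E) f ρ).exists_measurable_map_eq_unitInterval
  have hgraph : Measurable fun p : β × I => (p.1, F p.1 p.2) := measurable_fst.prodMk hF
  have hjoint : ((ρ.map f).prod volume).map (fun p => (p.1, F p.1 p.2)) =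
      ρ.map fun e => (f e, e) :=
    (map_prodMk_prod_eq_compProd _ _ volume hF hFκ).trans
      (compProd_map_condDistrib aemeasurable_id)
  refine ⟨Function.uncurry F, ⟨hF, ?_⟩, ?_⟩
  · calc ((ρ.map f).prod volume).map (Function.uncurry F)
        = (((ρ.map f).prod volume).map fun p => (p.1, F p.1 p.2)).map Prod.snd :=
          (Measure.map_map measurable_snd hgraph).symm
      _ = (ρ.map fun e => (f e, e)).map Prod.snd := by rw [hjoint]
      _ = ρ := by
          rw [Measure.map_map measurable_snd (hf.prodMk measurable_id')]
          exact Measure.map_id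
  · have hmeas : MeasurableSet {q : β × E | f q.2 = q.1} :=
      measurableSet_eq_fun (hf.comp measurable_snd) measurable_fst
    have hae : ∀ᵐ q ∂ρ.map fun e => (f e, e), f q.2 = q.1 :=
      (ae_map_iff (hf.prodMk measurable_id).aemeasurable hmeas).2 (ae_of_all _ fun _ => rfl)
    rw [← hjoint] at hae
    exact (ae_map_iff hgraph.aemeasurable hmeas).1 hae

end UnitIntervalRandomization

section Past

variable {Ω α : Type*} [MeasurableSpace α] {Y : ℕ → Ω → α} {k : ℕ}

theorem past_le_iff {m : MeasurableSpace Ω} :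
    past Y k ≤ m ↔ ∀ j ≥ k, Measurable[m] (Y j) := by
  simp only [past, iSup_le_iff, measurable_iff_comap_le]

theorem measurable_past {j : ℕ} (hkj : k ≤ j) : Measurable[past Y k] (Y j) :=
  past_le_iff.1 le_rfl j hkj

end Past

section StateProcess

variable {Ω E M : Type*}

/-- The random recursion driven by maps `step k` from a state space `E` to pairs (emitted noise,
next state), started from `init`. Index `k` is time `-k`, so the recursion runs into the past. -/
def stateProcess (step : ℕ → E → M × E) (init : Ω → E) : ℕ → Ω → E
  | 0 => init
  | k + 1 => fun ω => (step k (stateProcess step init k ω)).2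

variable [MeasurableSpace E] [MeasurableSpace M] {step : ℕ → E → M × E} {init : Ω → E}

theorem measurable_comap_stateProcess_of_le (hstep : ∀ k, Measurable (step k)) {k j : ℕ}
    (hkj : k ≤ j) :
    Measurable[MeasurableSpace.comap (stateProcess step init k) inferInstance]
      (stateProcess step init j) := by
  induction j, hkj using Nat.le_induction with
  | base => exact comap_measurable _
  | succ j _ ih => exact measurable_snd.comp ((hstep j).comp ih)

variable [MeasurableSpace Ω] {P : Measure Ω} {μ : ℕ → Measure M} {π : ℕ → Measure E}
  [∀ k, IsProbabilityMeasure (μ k)] [∀ k, IsProbabilityMeasure (π k)]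

theorem measurePreserving_stateProcess (hinit : MeasurePreserving init P (π 0))
    (hstep : ∀ k, MeasurePreserving (step k) (π k) ((μ k).prod (π (k + 1)))) (k : ℕ) :
    MeasurePreserving (stateProcess step init k) P (π k) := by
  induction k with
  | zero => exact hinit
  | succ k ih => exact measurePreserving_snd.comp ((hstep k).comp ih)

theorem measurePreserving_noise_stateProcess (hinit : MeasurePreserving init P (π 0))
    (hstep : ∀ k, MeasurePreserving (step k) (π k) ((μ k).prod (π (k + 1)))) (k : ℕ) :
    MeasurePreserving (fun ω => (step k (stateProcess step init k ω)).1) P (μ k) :=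
  measurePreserving_fst.comp ((hstep k).comp (measurePreserving_stateProcess hinit hstep k))

theorem indepFun_noise_stateProcess (hinit : MeasurePreserving init P (π 0))
    (hstep : ∀ k, MeasurePreserving (step k) (π k) ((μ k).prod (π (k + 1)))) (k : ℕ) :
    IndepFun (fun ω => (step k (stateProcess step init k ω)).1)
      (stateProcess step init (k + 1)) P := by
  have : IsFiniteMeasure (P.map init) := hinit.map_eq ▸ inferInstance
  have : IsFiniteMeasure P := Measure.isFiniteMeasure_of_map hinit.aemeasurable
  have hpair := (hstep k).comp (measurePreserving_stateProcess hinit hstep k)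
  have hnoise := measurePreserving_noise_stateProcess hinit hstep k
  have hnext := measurePreserving_stateProcess hinit hstep (k + 1)
  rw [indepFun_iff_map_prod_eq_prod_map_map hnoise.aemeasurable hnext.aemeasurable]
  exact hpair.map_eq.trans (congrArg₂ Measure.prod hnoise.map_eq hnext.map_eq).symm

theorem isSolution_of_measurePreserving_step {α : Type*} [MeasurableSpace α] [SMul M α]
    {pos : E → α} (hpos : Measurable pos) (hinit : MeasurePreserving init P (π 0))
    (hstep : ∀ k, MeasurePreserving (step k) (π k) ((μ k).prod (π (k + 1))))
    (heq : ∀ k, ∀ᵐ e ∂π k, pos e = (step k e).1 • pos (step k e).2) :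
    IsSolution P μ (fun k ω => pos (stateProcess step init k ω))
      (fun k ω => (step k (stateProcess step init k ω)).1) := by
  have hstate := measurePreserving_stateProcess hinit hstep
  have hnoise := measurePreserving_noise_stateProcess hinit hstep
  refine ⟨fun k => hpos.comp (hstate k).measurable, fun k => (hnoise k).measurable,
    fun k => (hstate k).quasiMeasurePreserving.ae (heq k), fun k => ?_,
    fun k => (hnoise k).map_eq⟩
  have hpast (j : ℕ) (hj : k + 1 ≤ j) :
      Measurable[MeasurableSpace.comap (stateProcess step init (k + 1)) inferInstance]
        (stateProcess step init j) :=
    measurable_comap_stateProcess_of_le (fun k => (hstep k).measurable) hj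
  refine indep_of_indep_of_le_right (indepFun_noise_stateProcess hinit hstep k) (sup_le ?_ ?_)
  · exact past_le_iff.2 fun j hj => hpos.comp (hpast j hj)
  · exact past_le_iff.2 fun j hj => measurable_fst.comp ((hstep j).measurable.comp (hpast j hj))

end StateProcess

section Existence

open unitInterval

variable {α M : Type*} [MeasurableSpace α] [MeasurableSpace M] [SMul M α] [MeasurableSMul₂ M α]

theorem map_smul_fst_prod_prod (μ : Measure M) [SFinite μ] (ν : Measure α) [SFinite ν]
    {R : Type*} [MeasurableSpace R] (τ : Measure R) [IsProbabilityMeasure τ] :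
    (μ.prod (ν.prod τ)).map (fun q => q.1 • q.2.1) = conv μ ν := by
  have hproj : MeasurePreserving (Prod.map id Prod.fst) (μ.prod (ν.prod τ)) (μ.prod ν) :=
    (MeasurePreserving.id μ).prod measurePreserving_fst
  rw [conv, ← hproj.map_eq, Measure.map_map (by fun_prop) hproj.measurable]
  rfl

theorem exists_isSolution_of_convolution_eq [StandardBorelSpace α] [StandardBorelSpace M]
    {μ : ℕ → Measure M} [∀ k, IsProbabilityMeasure (μ k)]
    {lam : ℕ → Measure α} [∀ k, IsProbabilityMeasure (lam k)]
    (hconv : ∀ k, lam k = conv (μ k) (lam (k + 1)))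
    {Ω : Type*} [MeasurableSpace Ω] {P : Measure Ω} {init : Ω → α × I}
    (hinit : MeasurePreserving init P ((lam 0).prod volume)) :
    ∃ (X : ℕ → Ω → α) (N : ℕ → Ω → M), IsSolution P μ X N ∧ ∀ k, P.map (X k) = lam k := by
  have : Nonempty α := nonempty_of_isProbabilityMeasure (lam 0)
  have : Nonempty M := nonempty_of_isProbabilityMeasure (μ 0)
  have hsection k := exists_measurePreserving_section_of_prod_unitInterval
    ((μ k).prod ((lam (k + 1)).prod (volume : Measure I)))
    (f := fun q => q.1 • q.2.1) (by fun_prop)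
  simp only [map_smul_fst_prod_prod, ← hconv] at hsection
  choose step hstep heq using hsection
  have hstate := measurePreserving_stateProcess (π := fun k => (lam k).prod volume) hinit hstep
  exact ⟨_, _,
    isSolution_of_measurePreserving_step measurable_fst hinit hstep
      fun k => (heq k).mono fun _ h => h.symm,
    fun k => (measurePreserving_fst.comp (hstate k)).map_eq⟩

end Existence

section Uniqueness

variable {Ω α M : Type*}

/-- The values of `X` at the indices `k, …, k + m` and of `N` at the indices `k, …, k + m - 1`.
It contains one more value of `X` than of `N`, so that `X k` is available even for `m = 0`. -/
def pathSegment (X : ℕ → Ω → α) (N : ℕ → Ω → M) (k m : ℕ) (ω : Ω) :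
    (Fin (m + 1) → α) × (Fin m → M) :=
  (fun i => X (k + i) ω, fun i => N (k + i) ω)

/-- Extends a path segment by one noise term `p.1` and the value that Tsirelson's equation then
prescribes at the new index. -/
def consNoise [SMul M α] {m : ℕ} (p : M × ((Fin (m + 1) → α) × (Fin m → M))) :
    (Fin (m + 2) → α) × (Fin (m + 1) → M) :=
  (Fin.cons (p.1 • p.2.1 0) p.2.1, Fin.cons p.1 p.2.2)

variable [MeasurableSpace α] [MeasurableSpace M]

theorem measurable_consNoise [SMul M α] [MeasurableSMul₂ M α] {m : ℕ} :
    Measurable (consNoise (α := α) (M := M) (m := m)) := by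
  refine .prodMk (measurable_pi_iff.2 (Fin.cases ?_ fun i => ?_))
    (measurable_pi_iff.2 (Fin.cases ?_ fun i => ?_)) <;>
  simp only [Fin.cons_zero, Fin.cons_succ] <;> fun_prop

theorem measurable_pathSegment {_ : MeasurableSpace Ω} {X : ℕ → Ω → α} {N : ℕ → Ω → M} {k : ℕ}
    (hX : ∀ j ≥ k, Measurable (X j)) (hN : ∀ j ≥ k, Measurable (N j)) (m : ℕ) :
    Measurable (pathSegment X N k m) :=
  .prodMk (measurable_pi_iff.2 fun _ => hX _ (Nat.le_add_right k _))
    (measurable_pi_iff.2 fun _ => hN _ (Nat.le_add_right k _))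

theorem measurable_past_pathSegment (X : ℕ → Ω → α) (N : ℕ → Ω → M) (k m : ℕ) :
    Measurable[past X k ⊔ past N k] (pathSegment X N k m) :=
  measurable_pathSegment (fun _ hj => (measurable_past hj).mono le_sup_left le_rfl)
    (fun _ hj => (measurable_past hj).mono le_sup_right le_rfl) m

theorem map_pathSegment_zero [MeasurableSpace Ω] {P : Measure Ω} {X : ℕ → Ω → α}
    {N : ℕ → Ω → M} {k : ℕ} (hX : Measurable (X k)) :
    P.map (pathSegment X N k 0) = (P.map (X k)).map fun x => (fun _ => x, Fin.elim0) := by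
  rw [Measure.map_map (by fun_prop) hX]
  congr 1
  funext ω
  exact Prod.ext (funext fun i => by simp [pathSegment]) (funext fun i => i.elim0)

namespace IsSolution

variable [MeasurableSpace Ω] [SMul M α] {P : Measure Ω} {μ : ℕ → Measure M}
  {X : ℕ → Ω → α} {N : ℕ → Ω → M}

theorem pathSegment_succ_ae_eq (h : IsSolution P μ X N) (k m : ℕ) :
    pathSegment X N k (m + 1) =ᵐ[P] fun ω => consNoise (N k ω, pathSegment X N (k + 1) m ω) := by
  filter_upwards [h.eqn k] with ω hω
  refine Prod.ext (funext (Fin.cases hω fun i => ?_)) (funext (Fin.cases rfl fun i => ?_)) <;>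
  simp [pathSegment, consNoise, Nat.add_right_comm, Nat.add_assoc]

theorem map_pathSegment_succ [IsFiniteMeasure P] [MeasurableSMul₂ M α] (h : IsSolution P μ X N)
    (k m : ℕ) :
    P.map (pathSegment X N k (m + 1)) =
      ((μ k).prod (P.map (pathSegment X N (k + 1) m))).map consNoise := by
  have hseg := measurable_pathSegment (k := k + 1) (fun j _ => h.measurable_X j)
    (fun j _ => h.measurable_N j) m
  have hindep : IndepFun (N k) (pathSegment X N (k + 1) m) P :=
    indep_of_indep_of_le_right (h.indep k) (measurable_past_pathSegment X N (k + 1) m).comap_le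
  rw [Measure.map_congr (h.pathSegment_succ_ae_eq k m), ← h.law_N k,
    ← (indepFun_iff_map_prod_eq_prod_map_map (h.measurable_N k).aemeasurable
      hseg.aemeasurable).1 hindep,
    Measure.map_map measurable_consNoise ((h.measurable_N k).prodMk hseg)]
  rfl

end IsSolution

variable {Ω₁ Ω₂ : Type*} [MeasurableSpace Ω₁] [MeasurableSpace Ω₂]
  {P₁ : Measure Ω₁} {P₂ : Measure Ω₂}
  {X₁ : ℕ → Ω₁ → α} {X₂ : ℕ → Ω₂ → α} {N₁ : ℕ → Ω₁ → M} {N₂ : ℕ → Ω₂ → M}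

theorem IsSolution.map_pathSegment_eq [SMul M α] [MeasurableSMul₂ M α]
    [IsFiniteMeasure P₁] [IsFiniteMeasure P₂]
    {μ : ℕ → Measure M} (h₁ : IsSolution P₁ μ X₁ N₁)
    (h₂ : IsSolution P₂ μ X₂ N₂) (hX : ∀ k, P₁.map (X₁ k) = P₂.map (X₂ k)) (k m : ℕ) :
    P₁.map (pathSegment X₁ N₁ k m) = P₂.map (pathSegment X₂ N₂ k m) := by
  induction m generalizing k with
  | zero =>
    rw [map_pathSegment_zero (h₁.measurable_X k), map_pathSegment_zero (h₂.measurable_X k), hX]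
  | succ m ih => rw [h₁.map_pathSegment_succ, h₂.map_pathSegment_succ, ih]

theorem jointLaw_eq_map_arrowProdEquivProdArrow [MeasurableSpace Ω] {P : Measure Ω}
    {X : ℕ → Ω → α} {N : ℕ → Ω → M} (hX : ∀ k, Measurable (X k))
    (hN : ∀ k, Measurable (N k)) :
    jointLaw P X N = (P.map fun ω k => (X k ω, N k ω)).map
      (MeasurableEquiv.arrowProdEquivProdArrow α M ℕ) := by
  rw [Measure.map_map (MeasurableEquiv.measurable _) (by fun_prop)]
  rfl

theorem map_restrict_eq_map_pathSegment [MeasurableSpace Ω] {P : Measure Ω}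
    {X : ℕ → Ω → α} {N : ℕ → Ω → M} (hX : ∀ k, Measurable (X k))
    (hN : ∀ k, Measurable (N k)) (s : Finset ℕ) {m : ℕ} (hm : ∀ i ∈ s, i < m) :
    P.map (fun ω => s.restrict fun k => (X k ω, N k ω)) =
      (P.map (pathSegment X N 0 m)).map fun p (i : s) =>
        (p.1 ⟨i, (hm i i.2).trans m.lt_succ_self⟩, p.2 ⟨i, hm i i.2⟩) := by
  rw [Measure.map_map (by fun_prop) (measurable_pathSegment (fun k _ => hX k) (fun k _ => hN k) m)]
  simp only [pathSegment, Function.comp_def, zero_add]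
  rfl

theorem jointLaw_eq_of_forall_map_pathSegment_eq [IsFiniteMeasure P₁]
    (hX₁ : ∀ k, Measurable (X₁ k)) (hN₁ : ∀ k, Measurable (N₁ k))
    (hX₂ : ∀ k, Measurable (X₂ k)) (hN₂ : ∀ k, Measurable (N₂ k))
    (hseg : ∀ m, P₁.map (pathSegment X₁ N₁ 0 m) = P₂.map (pathSegment X₂ N₂ 0 m)) :
    jointLaw P₁ X₁ N₁ = jointLaw P₂ X₂ N₂ := by
  have hfinite (s : Finset ℕ) : P₁.map (fun ω => s.restrict fun k => (X₁ k ω, N₁ k ω)) =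
      P₂.map (fun ω => s.restrict fun k => (X₂ k ω, N₂ k ω)) := by
    have hlt : ∀ i ∈ s, i < s.sup id + 1 := fun i hi => Nat.lt_succ_of_le (s.le_sup (f := id) hi)
    rw [map_restrict_eq_map_pathSegment hX₁ hN₁ s hlt,
      map_restrict_eq_map_pathSegment hX₂ hN₂ s hlt, hseg]
  have hlim₁ := isProjectiveLimit_map (P := P₁) (X := fun k ω => (X₁ k ω, N₁ k ω))
    (by fun_prop)
  have hlim₂ := isProjectiveLimit_map (P := P₂) (X := fun k ω => (X₂ k ω, N₂ k ω))
    (by fun_prop)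
  rw [jointLaw_eq_map_arrowProdEquivProdArrow hX₁ hN₁,
    jointLaw_eq_map_arrowProdEquivProdArrow hX₂ hN₂,
    hlim₁.unique fun s => (hlim₂ s).trans (hfinite s).symm]

theorem IsSolution.jointLaw_eq [SMul M α] [MeasurableSMul₂ M α]
    [IsFiniteMeasure P₁] [IsFiniteMeasure P₂] {μ : ℕ → Measure M} (h₁ : IsSolution P₁ μ X₁ N₁)
    (h₂ : IsSolution P₂ μ X₂ N₂) (hX : ∀ k, P₁.map (X₁ k) = P₂.map (X₂ k)) :
    jointLaw P₁ X₁ N₁ = jointLaw P₂ X₂ N₂ :=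
  jointLaw_eq_of_forall_map_pathSegment_eq h₁.measurable_X h₁.measurable_N h₂.measurable_X
    h₂.measurable_N (h₁.map_pathSegment_eq h₂ hX 0)

end Uniqueness

theorem measurePreserving_down_map_up {α : Type*} [MeasurableSpace α] (ν : Measure α) :
    MeasurePreserving ULift.down (ν.map ULift.up) ν :=
  ⟨measurable_down, by
    rw [Measure.map_map measurable_down measurable_up]
    exact Measure.map_id⟩

theorem standardBorelSpace_of_compactSpace_of_metrizableSpace (α : Type*) [TopologicalSpace α]
    [CompactSpace α] [TopologicalSpace.MetrizableSpace α] [MeasurableSpace α] [BorelSpace α] :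
    StandardBorelSpace α := by
  let := TopologicalSpace.metrizableSpaceMetric α
  infer_instance

theorem tsirelson_exists_unique_of_convolution_eq_general {α : Type u} {M : Type v}
    [MeasurableSpace α] [StandardBorelSpace α] [MeasurableSpace M] [StandardBorelSpace M]
    [SMul M α] [MeasurableSMul₂ M α]
    (μ : ℕ → Measure M) (hμ : ∀ k, IsProbabilityMeasure (μ k))
    (lam : ℕ → Measure α) (hlam : ∀ k, IsProbabilityMeasure (lam k))
    (hconv : ∀ k, lam k = conv (μ k) (lam (k + 1))) :
    (∃ (Ω : Type (max u v)) (_ : MeasurableSpace Ω) (P : Measure Ω)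
        (X : ℕ → Ω → α) (N : ℕ → Ω → M),
        IsProbabilityMeasure P ∧ IsSolution P μ X N ∧ ∀ k, P.map (X k) = lam k) ∧
    (∀ (Ω₁ : Type w) (_ : MeasurableSpace Ω₁) (P₁ : Measure Ω₁)
        (X₁ : ℕ → Ω₁ → α) (N₁ : ℕ → Ω₁ → M)
        (Ω₂ : Type w₂) (_ : MeasurableSpace Ω₂) (P₂ : Measure Ω₂)
        (X₂ : ℕ → Ω₂ → α) (N₂ : ℕ → Ω₂ → M),
        IsProbabilityMeasure P₁ → IsProbabilityMeasure P₂ →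
        IsSolution P₁ μ X₁ N₁ → IsSolution P₂ μ X₂ N₂ →
        (∀ k, P₁.map (X₁ k) = lam k) → (∀ k, P₂.map (X₂ k) = lam k) →
        jointLaw P₁ X₁ N₁ = jointLaw P₂ X₂ N₂) := by
  refine ⟨?_, fun Ω₁ _ P₁ X₁ N₁ Ω₂ _ P₂ X₂ N₂ _ _ h₁ h₂ hX₁ hX₂ =>
    h₁.jointLaw_eq h₂ fun k => (hX₁ k).trans (hX₂ k).symm⟩
  obtain ⟨X, N, hsol, hX⟩ := exists_isSolution_of_convolution_eq hconv
    (measurePreserving_down_map_up.{u, v} ((lam 0).prod (volume : Measure unitInterval)))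
  exact ⟨_, _, _, X, N, Measure.isProbabilityMeasure_map measurable_up.aemeasurable, hsol, hX⟩

/-- If a family of probability laws on `S` solves the convolution equation
`λ_k = μ_k * λ_{k-1}`, then there is a solution of Tsirelson's equation, unique up to
identity in law, whose one-dimensional marginals are the `λ_k`. -/
theorem tsirelson_exists_unique_of_convolution_eq
    (μ : ℕ → Measure G) (hμ : ∀ k, IsProbabilityMeasure (μ k))
    (lam : ℕ → Measure S) (hlam : ∀ k, IsProbabilityMeasure (lam k))
    (hconv : ∀ k, lam k = conv (μ k) (lam (k + 1))) :
    (∃ (Ω : Type (max u v)) (_ : MeasurableSpace Ω) (P : Measure Ω)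
        (X : ℕ → Ω → S) (N : ℕ → Ω → G),
        IsProbabilityMeasure P ∧ IsSolution P μ X N ∧ ∀ k, P.map (X k) = lam k) ∧
    (∀ (Ω₁ : Type w) (_ : MeasurableSpace Ω₁) (P₁ : Measure Ω₁)
        (X₁ : ℕ → Ω₁ → S) (N₁ : ℕ → Ω₁ → G)
        (Ω₂ : Type w₂) (_ : MeasurableSpace Ω₂) (P₂ : Measure Ω₂)
        (X₂ : ℕ → Ω₂ → S) (N₂ : ℕ → Ω₂ → G),
        IsProbabilityMeasure P₁ → IsProbabilityMeasure P₂ →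
        IsSolution P₁ μ X₁ N₁ → IsSolution P₂ μ X₂ N₂ →
        (∀ k, P₁.map (X₁ k) = lam k) → (∀ k, P₂.map (X₂ k) = lam k) →
        jointLaw P₁ X₁ N₁ = jointLaw P₂ X₂ N₂) := by
  have := standardBorelSpace_of_compactSpace_of_metrizableSpace S
  have := standardBorelSpace_of_compactSpace_of_metrizableSpace G
  exact tsirelson_exists_unique_of_convolution_eq_general μ hμ lam hlam hconv

end Tsirelson
end

section
/- For any two solutions {X⁽¹⁾,N⁽¹⁾} and {X⁽²⁾,N⁽²⁾} of Tsirelson's equation with noise law μ, there exists a triple of processes {X̃⁽¹⁾, X̃⁽²⁾, Ñ} on some probability space (Ω̃,F̃,P̃) such that: (1) (X⁽¹⁾,N⁽¹⁾) and (X̃⁽¹⁾,Ñ) are identical in law, and (X⁽²⁾,N⁽²⁾) and (X̃⁽²⁾,Ñ) are identical in law; (2) for each k ∈ -ℕ, Ñ_k is independent of σ(X̃⁽¹⁾_j, X̃⁽²⁾_j, Ñ_j : j ≤ k-1); (3) X̃⁽¹⁾ and X̃⁽²⁾ are conditionally independent given σ(Ñ). -/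
open MeasureTheory ProbabilityTheory Filter Topology
open scoped NNReal ENNReal

universe u v w w₂

/-!
The two noise processes have the same law, so draw one noise path `M` and, given `M`, draw paths
`Y₁` and `Y₂` independently from the conditional laws of `X₁` given `N₁` and of `X₂` given `N₂`.
Only the independence of `M k` from the strict past of `(Y₁, Y₂, M)` needs an argument. The noise
after a given time is independent of `Mᵖ`, the earlier noise, jointly with `Yᵢᵖ`, the earlier part
of `Yᵢ`; hence the conditional law of `Yᵢᵖ` given all of `M` depends on `Mᵖ` alone. The conditional
law of `(Y₁ᵖ, Y₂ᵖ)` given `M` is the product of these two, so it too depends on `Mᵖ` alone, which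
says that the later noise is independent of `(Mᵖ, Y₁ᵖ, Y₂ᵖ)`.
-/

section SuccessiveIndependence

variable {Ω ι : Type*} [LinearOrder ι] {mΩ : MeasurableSpace Ω} {P : Measure Ω}
  {m 𝒢 : ι → MeasurableSpace Ω}

lemma measure_biInter_inter_of_indep_past (hindep : ∀ i, Indep (m i) (𝒢 i) P)
    (hle : ∀ ⦃i j⦄, i < j → m j ≤ 𝒢 i) {A : ι → Set Ω} {F : Set Ω} {s : Finset ι}
    (hA : ∀ i ∈ s, MeasurableSet[m i] (A i)) (hF : ∀ i ∈ s, MeasurableSet[𝒢 i] F) :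
    P ((⋂ i ∈ s, A i) ∩ F) = (∏ i ∈ s, P (A i)) * P F := by
  induction s using Finset.induction_on_max generalizing F with
  | empty => simp
  | insert a s hlt ih =>
    have ha : a ∉ s := fun h => lt_irrefl a (hlt a h)
    rw [Finset.forall_mem_insert] at hA hF
    have hAF : ∀ i ∈ s, MeasurableSet[𝒢 i] (A a ∩ F) := fun i hi =>
      (hle (hlt i hi) _ hA.1).inter (hF.2 i hi)
    calc P ((⋂ i ∈ insert a s, A i) ∩ F)
        = P ((⋂ i ∈ s, A i) ∩ (A a ∩ F)) := by
          rw [Finset.set_biInter_insert, Set.inter_comm (A a), Set.inter_assoc]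
      _ = (∏ i ∈ s, P (A i)) * (P (A a) * P F) := by
          rw [ih hA.2 hAF, (Indep_iff _ _ _).1 (hindep a) _ _ hA.1 hF.1]
      _ = (∏ i ∈ insert a s, P (A i)) * P F := by
          rw [Finset.prod_insert ha, ← mul_assoc, mul_comm (P (A a))]

lemma iIndep_of_indep_past [IsProbabilityMeasure P] (hindep : ∀ i, Indep (m i) (𝒢 i) P)
    (hle : ∀ ⦃i j⦄, i < j → m j ≤ 𝒢 i) : iIndep m P := by
  rw [iIndep_iff]
  intro s A hA
  simpa using measure_biInter_inter_of_indep_past hindep hle hA fun _ _ => MeasurableSet.univ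

lemma indep_biSup_of_indep_past [IsProbabilityMeasure P] (hm : ∀ i, m i ≤ mΩ)
    (hindep : ∀ i, Indep (m i) (𝒢 i) P) (hle : ∀ ⦃i j⦄, i < j → m j ≤ 𝒢 i)
    {t : Set ι} {ℋ : MeasurableSpace Ω} (hℋ : ℋ ≤ mΩ) (hℋ𝒢 : ∀ i ∈ t, ℋ ≤ 𝒢 i) :
    Indep (⨆ i ∈ t, m i) ℋ P := by
  refine IndepSets.indep (iSup₂_le fun i _ => hm i) hℋ
    (isPiSystem_piiUnionInter _ (fun i => @MeasurableSpace.isPiSystem_measurableSet Ω (m i)) t)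
    (@MeasurableSpace.isPiSystem_measurableSet Ω ℋ)
    (generateFrom_piiUnionInter_measurableSet m t).symm
    (@MeasurableSpace.generateFrom_measurableSet Ω ℋ).symm ?_
  rw [IndepSets_iff]
  rintro _ F ⟨s, hst, A, hA, rfl⟩ hF
  have hprod : P (⋂ i ∈ s, A i) = ∏ i ∈ s, P (A i) :=
    (iIndep_of_indep_past hindep hle).meas_biInter hA
  rw [hprod, measure_biInter_inter_of_indep_past hindep hle hA fun i hi => hℋ𝒢 i (hst hi) F hF]

end SuccessiveIndependence

section ConditionalDistribution

variable {Ω Ω' α β γ γ₁ γ₂ : Type*} {mΩ : MeasurableSpace Ω} {mΩ' : MeasurableSpace Ω'}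
  [MeasurableSpace α] [MeasurableSpace β] [MeasurableSpace γ]
  [MeasurableSpace γ₁] [MeasurableSpace γ₂]
  {P : Measure Ω} {Q : Measure Ω'}

lemma indepFun_of_identDistrib_prodMk [IsFiniteMeasure P] [IsFiniteMeasure Q]
    {U : Ω → α} {V : Ω → β} {U' : Ω' → α} {V' : Ω' → β}
    (h : IdentDistrib (fun ω => (U ω, V ω)) (fun ω => (U' ω, V' ω)) P Q)
    (hindep : IndepFun U' V' Q) : IndepFun U V P := by
  have hU : IdentDistrib U U' P Q := h.comp measurable_fst
  have hV : IdentDistrib V V' P Q := h.comp measurable_snd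
  rw [indepFun_iff_map_prod_eq_prod_map_map hU.aemeasurable_fst hV.aemeasurable_fst, h.map_eq,
    hU.map_eq, hV.map_eq]
  exact (indepFun_iff_map_prod_eq_prod_map_map hU.aemeasurable_snd hV.aemeasurable_snd).1 hindep

lemma const_compProd_prodMkLeft (ν : Measure β) [SFinite ν] (η : Kernel β γ) [IsSFiniteKernel η] :
    Kernel.const α ν ⊗ₖ Kernel.prodMkLeft α η = Kernel.const α (ν ⊗ₘ η) := by
  ext a s hs
  rw [Kernel.compProd_apply hs, Kernel.const_apply, Kernel.const_apply, Measure.compProd_apply hs]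
  rfl

variable {A : Ω → α} {B : Ω → β} {Y : Ω → γ} {η : Kernel β γ} [IsMarkovKernel η]

lemma hasCondDistrib_prodMkLeft_of_indepFun [IsFiniteMeasure P] (hA : AEMeasurable A P)
    (hindep : IndepFun A (fun ω => (B ω, Y ω)) P) (hY : HasCondDistrib Y B η P) :
    HasCondDistrib Y (fun ω => (A ω, B ω)) (η.prodMkLeft α) P := by
  refine HasCondDistrib.of_compProd (κ := Kernel.const α (P.map B)) ⟨by fun_prop, ?_⟩
  rw [const_compProd_prodMkLeft, Measure.compProd_const, ← hY.map_eq]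
  exact (indepFun_iff_map_prod_eq_prod_map_map hA hY.aemeasurable).1 hindep

lemma indepFun_prodMk_of_hasCondDistrib_prodMkLeft [IsFiniteMeasure P]
    (hindep : IndepFun A B P) (hY : HasCondDistrib Y (fun ω => (A ω, B ω)) (η.prodMkLeft α) P) :
    IndepFun A (fun ω => (B ω, Y ω)) P := by
  have hA : AEMeasurable A P := hY.aemeasurable_fst.fst
  have hB : AEMeasurable B P := hY.aemeasurable_fst.snd
  have hYB : HasCondDistrib Y B η P := HasCondDistrib.comp_right (hf := measurable_snd) hY
  rw [indepFun_iff_map_prod_eq_prod_map_map hA hYB.aemeasurable]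
  calc P.map (fun ω => (A ω, B ω, Y ω))
      = (P.map fun ω => ((A ω, B ω), Y ω)).map MeasurableEquiv.prodAssoc := by
        rw [AEMeasurable.map_map_of_aemeasurable (by fun_prop) hY.aemeasurable]
        rfl
    _ = ((P.map A ⊗ₘ Kernel.const α (P.map B)) ⊗ₘ η.prodMkLeft α).map
          MeasurableEquiv.prodAssoc := by
        rw [hY.map_eq, (indepFun_iff_map_prod_eq_prod_map_map hA hB).1 hindep,
          Measure.compProd_const]
    _ = (P.map A).prod (P.map fun ω => (B ω, Y ω)) := by
        rw [Measure.compProd_assoc', const_compProd_prodMkLeft, Measure.compProd_const, hYB.map_eq]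

lemma condExp_indicator_ae_eq_of_hasCondDistrib [IsFiniteMeasure P] [StandardBorelSpace γ]
    [Nonempty γ] (hA : Measurable A) (hYm : Measurable Y) {κ : Kernel α γ} [IsFiniteKernel κ]
    (hY : HasCondDistrib Y A κ P) {s : Set γ} (hs : MeasurableSet s) :
    P⟦Y ⁻¹' s | MeasurableSpace.comap A inferInstance⟧ =ᵐ[P] fun ω => (κ (A ω)).real s := by
  have hκ : condDistrib Y A P =ᵐ[P.map A] κ :=
    condDistrib_ae_eq_of_measure_eq_compProd A hY.aemeasurable_snd hY.map_eq
  filter_upwards [condDistrib_ae_eq_condExp hA hYm hs, ae_of_ae_map hA.aemeasurable hκ]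
    with ω hcondExp hω
  rw [← hcondExp, hω]

variable {Y₁ : Ω → γ₁} {Y₂ : Ω → γ₂} [StandardBorelSpace γ₁] [Nonempty γ₁]
  [StandardBorelSpace γ₂] [Nonempty γ₂]

lemma condExp_indicator_inter_ae_eq_mul_of_hasCondDistrib_prod [IsFiniteMeasure P]
    {κ₁ : Kernel α γ₁} [IsMarkovKernel κ₁] {κ₂ : Kernel α γ₂} [IsMarkovKernel κ₂]
    (hA : Measurable A) (hY₁ : Measurable Y₁) (hY₂ : Measurable Y₂)
    (hY : HasCondDistrib (fun ω => (Y₁ ω, Y₂ ω)) A (κ₁ ×ₖ κ₂) P)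
    {s : Set γ₁} (hs : MeasurableSet s) {t : Set γ₂} (ht : MeasurableSet t) :
    P⟦Y₁ ⁻¹' s ∩ Y₂ ⁻¹' t | MeasurableSpace.comap A inferInstance⟧ =ᵐ[P] fun ω =>
      (P⟦Y₁ ⁻¹' s | MeasurableSpace.comap A inferInstance⟧) ω *
        (P⟦Y₂ ⁻¹' t | MeasurableSpace.comap A inferInstance⟧) ω := by
  have hcond₁ : HasCondDistrib Y₁ A κ₁ P := by simpa using hY.fst
  have hcond₂ : HasCondDistrib Y₂ A κ₂ P := by simpa using hY.snd
  filter_upwards [condExp_indicator_ae_eq_of_hasCondDistrib hA hY₁ hcond₁ hs,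
    condExp_indicator_ae_eq_of_hasCondDistrib hA hY₂ hcond₂ ht,
    condExp_indicator_ae_eq_of_hasCondDistrib hA (hY₁.prodMk hY₂) hY (hs.prod ht)]
    with ω h₁ h₂ h₁₂
  rw [Set.mk_preimage_prod] at h₁₂
  rw [h₁, h₂, h₁₂, Kernel.prod_apply, measureReal_prod_prod]

lemma ae_eq_prodMkLeft_condDistrib_of_indepFun [IsFiniteMeasure P] [StandardBorelSpace γ]
    [Nonempty γ] {κ : Kernel (α × β) γ} [IsFiniteKernel κ]
    (hY : HasCondDistrib Y (fun ω => (A ω, B ω)) κ P)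
    (hindep : IndepFun A (fun ω => (B ω, Y ω)) P) :
    κ =ᵐ[P.map fun ω => (A ω, B ω)] (condDistrib Y B P).prodMkLeft α := by
  have hYm : AEMeasurable Y P := hY.aemeasurable_snd
  have hYB : HasCondDistrib Y B (condDistrib Y B P) P :=
    ⟨hY.aemeasurable_fst.snd.prodMk hYm, (compProd_map_condDistrib hYm).symm⟩
  have hYAB : HasCondDistrib Y (fun ω => (A ω, B ω)) ((condDistrib Y B P).prodMkLeft α) P :=
    hasCondDistrib_prodMkLeft_of_indepFun hY.aemeasurable_fst.fst hindep hYB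
  exact (condDistrib_ae_eq_of_measure_eq_compProd _ hYm hY.map_eq).symm.trans
    (condDistrib_ae_eq_of_measure_eq_compProd _ hYm hYAB.map_eq)

lemma indepFun_prodMk_prodMk_of_hasCondDistrib_prod [IsFiniteMeasure P]
    {κ₁ : Kernel (α × β) γ₁} [IsMarkovKernel κ₁] {κ₂ : Kernel (α × β) γ₂} [IsMarkovKernel κ₂]
    (hY : HasCondDistrib (fun ω => (Y₁ ω, Y₂ ω)) (fun ω => (A ω, B ω)) (κ₁ ×ₖ κ₂) P)
    (h₁ : IndepFun A (fun ω => (B ω, Y₁ ω)) P) (h₂ : IndepFun A (fun ω => (B ω, Y₂ ω)) P) :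
    IndepFun A (fun ω => (B ω, Y₁ ω, Y₂ ω)) P := by
  have hcond₁ : HasCondDistrib Y₁ (fun ω => (A ω, B ω)) κ₁ P := by simpa using hY.fst
  have hcond₂ : HasCondDistrib Y₂ (fun ω => (A ω, B ω)) κ₂ P := by simpa using hY.snd
  have hκ : κ₁ ×ₖ κ₂ =ᵐ[P.map fun ω => (A ω, B ω)]
      (condDistrib Y₁ B P ×ₖ condDistrib Y₂ B P).prodMkLeft α := by
    filter_upwards [ae_eq_prodMkLeft_condDistrib_of_indepFun hcond₁ h₁,
      ae_eq_prodMkLeft_condDistrib_of_indepFun hcond₂ h₂] with p hp₁ hp₂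
    rw [Kernel.prod_apply, hp₁, hp₂, Kernel.prodMkLeft_apply, Kernel.prodMkLeft_apply,
      Kernel.prodMkLeft_apply, Kernel.prod_apply]
  have hcond : HasCondDistrib (fun ω => (Y₁ ω, Y₂ ω)) (fun ω => (A ω, B ω))
      ((condDistrib Y₁ B P ×ₖ condDistrib Y₂ B P).prodMkLeft α) P :=
    ⟨hY.aemeasurable, hY.map_eq.trans (Measure.compProd_congr hκ)⟩
  exact indepFun_prodMk_of_hasCondDistrib_prodMkLeft (h₁.comp measurable_id measurable_fst) hcond

end ConditionalDistribution

section Coupling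

variable {Ω₁ Ω₂ α γ₁ γ₂ : Type*} [MeasurableSpace Ω₁] [MeasurableSpace Ω₂] [MeasurableSpace α]
  [MeasurableSpace γ₁] [StandardBorelSpace γ₁] [Nonempty γ₁]
  [MeasurableSpace γ₂] [StandardBorelSpace γ₂] [Nonempty γ₂]
  {P₁ : Measure Ω₁} {P₂ : Measure Ω₂} [IsFiniteMeasure P₁] [IsFiniteMeasure P₂]
  {Z₁ : Ω₁ → α} {W₁ : Ω₁ → γ₁} {Z₂ : Ω₂ → α} {W₂ : Ω₂ → γ₂}

/-- The conditionally independent coupling of `(Z₁, W₁)` and `(Z₂, W₂)` over the law of `Z₁`: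
the joint law of `(Z, V₁, V₂)` where `Z` is distributed as `Z₁` and, given `Z`, the variables
`V₁` and `V₂` are drawn independently from the conditional laws of `Wᵢ` given `Zᵢ`. -/
noncomputable def condIndepCoupling (P₁ : Measure Ω₁) [IsFiniteMeasure P₁] (Z₁ : Ω₁ → α)
    (W₁ : Ω₁ → γ₁) (P₂ : Measure Ω₂) [IsFiniteMeasure P₂] (Z₂ : Ω₂ → α) (W₂ : Ω₂ → γ₂) :
    Measure (α × γ₁ × γ₂) :=
  P₁.map Z₁ ⊗ₘ (condDistrib W₁ Z₁ P₁ ×ₖ condDistrib W₂ Z₂ P₂)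

instance : IsFiniteMeasure (condIndepCoupling P₁ Z₁ W₁ P₂ Z₂ W₂) := by
  unfold condIndepCoupling
  infer_instance

lemma hasLaw_fst_condIndepCoupling :
    HasLaw Prod.fst (P₁.map Z₁) (condIndepCoupling P₁ Z₁ W₁ P₂ Z₂ W₂) :=
  ⟨measurable_fst.aemeasurable, Measure.fst_compProd _ _⟩

lemma hasCondDistrib_snd_condIndepCoupling :
    HasCondDistrib Prod.snd Prod.fst (condDistrib W₁ Z₁ P₁ ×ₖ condDistrib W₂ Z₂ P₂)
      (condIndepCoupling P₁ Z₁ W₁ P₂ Z₂ W₂) := by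
  refine ⟨by fun_prop, ?_⟩
  rw [hasLaw_fst_condIndepCoupling.map_eq]
  exact Measure.map_id

lemma identDistrib_condIndepCoupling_left (hZ₁ : AEMeasurable Z₁ P₁) (hW₁ : AEMeasurable W₁ P₁) :
    IdentDistrib (fun p => (p.1, p.2.1)) (fun ω => (Z₁ ω, W₁ ω))
      (condIndepCoupling P₁ Z₁ W₁ P₂ Z₂ W₂) P₁ := by
  have hcond : HasCondDistrib (fun p => p.2.1) Prod.fst (condDistrib W₁ Z₁ P₁)
      (condIndepCoupling P₁ Z₁ W₁ P₂ Z₂ W₂) := by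
    simpa using (hasCondDistrib_snd_condIndepCoupling (P₁ := P₁) (Z₁ := Z₁) (W₁ := W₁)
      (P₂ := P₂) (Z₂ := Z₂) (W₂ := W₂)).fst
  exact (hasLaw_fst_condIndepCoupling.prodMk_of_hasCondDistrib hcond).identDistrib
    ⟨hZ₁.prodMk hW₁, (compProd_map_condDistrib hW₁).symm⟩

lemma identDistrib_condIndepCoupling_right (hZ : IdentDistrib Z₁ Z₂ P₁ P₂)
    (hW₂ : AEMeasurable W₂ P₂) :
    IdentDistrib (fun p => (p.1, p.2.2)) (fun ω => (Z₂ ω, W₂ ω))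
      (condIndepCoupling P₁ Z₁ W₁ P₂ Z₂ W₂) P₂ := by
  have hcond : HasCondDistrib (fun p => p.2.2) Prod.fst (condDistrib W₂ Z₂ P₂)
      (condIndepCoupling P₁ Z₁ W₁ P₂ Z₂ W₂) := by
    simpa using (hasCondDistrib_snd_condIndepCoupling (P₁ := P₁) (Z₁ := Z₁) (W₁ := W₁)
      (P₂ := P₂) (Z₂ := Z₂) (W₂ := W₂)).snd
  refine (hasLaw_fst_condIndepCoupling.prodMk_of_hasCondDistrib hcond).identDistrib
    ⟨hZ.aemeasurable_snd.prodMk hW₂, ?_⟩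
  rw [hZ.map_eq, compProd_map_condDistrib hW₂]

lemma isProbabilityMeasure_condIndepCoupling {P₁ : Measure Ω₁} [IsProbabilityMeasure P₁]
    (hZ₁ : AEMeasurable Z₁ P₁) :
    IsProbabilityMeasure (condIndepCoupling P₁ Z₁ W₁ P₂ Z₂ W₂) := by
  have := Measure.isProbabilityMeasure_map hZ₁
  unfold condIndepCoupling
  infer_instance

end Coupling

section Past

variable {Ω α β : Type*} [MeasurableSpace α] [MeasurableSpace β]

lemma past_anti (Y : ℕ → Ω → α) : Antitone (past Y) :=
  fun _ _ hkl => biSup_mono fun _ hj => hkl.trans hj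

lemma comap_le_past_sup_past (Y : ℕ → Ω → α) (Z : ℕ → Ω → β) ⦃i j : ℕ⦄ (hij : i < j) :
    MeasurableSpace.comap (Z j) inferInstance ≤ past Y (i + 1) ⊔ past Z (i + 1) :=
  le_sup_of_le_right (le_iSup₂_of_le j hij le_rfl)

lemma past_eq_comap (Y : ℕ → Ω → α) (k : ℕ) :
    past Y k = MeasurableSpace.comap (fun ω (j : {j // ¬ j < k}) => Y j ω) inferInstance := by
  simp only [past, MeasurableSpace.comap_process_pi, iSup_subtype, not_lt, ge_iff_le]

lemma past_zero_eq_comap (Y : ℕ → Ω → α) :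
    past Y 0 = MeasurableSpace.comap (fun ω j => Y j ω) inferInstance := by
  simp only [past, MeasurableSpace.comap_process_pi, ge_iff_le, zero_le, iSup_pos]

lemma past_sup_past_eq_comap (Y : ℕ → Ω → α) (Z : ℕ → Ω → β) (k : ℕ) :
    past Y k ⊔ past Z k = MeasurableSpace.comap
      (fun ω => (fun j : {j // ¬ j < k} => Y j ω, fun j : {j // ¬ j < k} => Z j ω))
      inferInstance := by
  rw [past_eq_comap, past_eq_comap]
  exact (MeasurableSpace.comap_prodMk _ _).symm

lemma condExp_indicator_inter_past_ae_eq_mul {S₁ S₂ : Type*} [MeasurableSpace Ω]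
    [MeasurableSpace S₁] [StandardBorelSpace S₁] [Nonempty S₁]
    [MeasurableSpace S₂] [StandardBorelSpace S₂] [Nonempty S₂] {P : Measure Ω} [IsFiniteMeasure P]
    {M : ℕ → Ω → α} {Y₁ : ℕ → Ω → S₁} {Y₂ : ℕ → Ω → S₂} {κ₁ : Kernel (ℕ → α) (ℕ → S₁)}
    [IsMarkovKernel κ₁] {κ₂ : Kernel (ℕ → α) (ℕ → S₂)} [IsMarkovKernel κ₂]
    (hM : ∀ k, Measurable (M k)) (hY₁ : ∀ k, Measurable (Y₁ k)) (hY₂ : ∀ k, Measurable (Y₂ k))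
    (hY : HasCondDistrib (fun ω => ((fun k => Y₁ k ω), fun k => Y₂ k ω)) (fun ω k => M k ω)
      (κ₁ ×ₖ κ₂) P) {A B : Set Ω} (hA : MeasurableSet[past Y₁ 0] A)
    (hB : MeasurableSet[past Y₂ 0] B) :
    P⟦A ∩ B | past M 0⟧ =ᵐ[P] fun ω => (P⟦A | past M 0⟧) ω * (P⟦B | past M 0⟧) ω := by
  rw [past_zero_eq_comap] at hA hB ⊢
  obtain ⟨s, hs, rfl⟩ := hA
  obtain ⟨t, ht, rfl⟩ := hB
  exact condExp_indicator_inter_ae_eq_mul_of_hasCondDistrib_prod (measurable_pi_lambda _ hM)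
    (measurable_pi_lambda _ hY₁) (measurable_pi_lambda _ hY₂) hY hs ht

end Past

/-- `N` is an innovation for `X`: each `N k` is independent of the joint strict past of `X` and `N`
(index `j` standing for time `-j`). A solution of Tsirelson's equation has this property; the
equation itself is not part of the notion. -/
structure IsInnovation {Ω S G : Type*} [MeasurableSpace Ω] [MeasurableSpace S] [MeasurableSpace G]
    (P : Measure Ω) (X : ℕ → Ω → S) (N : ℕ → Ω → G) : Prop where
  measurable_X : ∀ k, Measurable (X k)
  measurable_N : ∀ k, Measurable (N k)
  indep : ∀ k, Indep (MeasurableSpace.comap (N k) inferInstance)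
      (past X (k + 1) ⊔ past N (k + 1)) P

lemma IsSolution.isInnovation {Ω S G : Type*} [MeasurableSpace Ω] [MeasurableSpace S]
    [MeasurableSpace G] [SMul G S] {P : Measure Ω} {μ : ℕ → Measure G} {X : ℕ → Ω → S}
    {N : ℕ → Ω → G} (h : IsSolution P μ X N) : IsInnovation P X N :=
  ⟨h.measurable_X, h.measurable_N, h.indep⟩

namespace IsInnovation

variable {Ω Ω' S S₁ S₂ G : Type*} {mΩ : MeasurableSpace Ω} [MeasurableSpace Ω']
  [MeasurableSpace S] [MeasurableSpace S₁] [MeasurableSpace S₂] [MeasurableSpace G]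
  {P : Measure Ω} {P' : Measure Ω'} {X : ℕ → Ω → S} {N : ℕ → Ω → G}

lemma measurable_path_X (h : IsInnovation P X N) : Measurable fun ω k => X k ω :=
  measurable_pi_lambda _ h.measurable_X

lemma measurable_path_N (h : IsInnovation P X N) : Measurable fun ω k => N k ω :=
  measurable_pi_lambda _ h.measurable_N

lemma of_identDistrib [IsFiniteMeasure P] [IsFiniteMeasure P'] {X' : ℕ → Ω' → S}
    {N' : ℕ → Ω' → G} (h : IsInnovation P X N) (hX' : ∀ k, Measurable (X' k))
    (hN' : ∀ k, Measurable (N' k))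
    (hlaw : IdentDistrib (fun ω => ((fun k => N' k ω), fun k => X' k ω))
      (fun ω => ((fun k => N k ω), fun k => X k ω)) P' P) : IsInnovation P' X' N' := by
  refine ⟨hX', hN', fun k => ?_⟩
  have hindep := h.indep k
  rw [past_sup_past_eq_comap] at hindep ⊢
  refine indepFun_of_identDistrib_prodMk (hlaw.comp (u := fun p => (p.1 k,
    (fun j : {j // ¬ j < k + 1} => p.2 j), (fun j : {j // ¬ j < k + 1} => p.1 j))) ?_) hindep
  fun_prop

variable [IsProbabilityMeasure P]

lemma iIndepFun_N (h : IsInnovation P X N) : iIndepFun N P :=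
  iIndep_of_indep_past h.indep (comap_le_past_sup_past X N)

lemma indepFun_head_tail (h : IsInnovation P X N) (k : ℕ) :
    IndepFun (fun ω (j : {j // j < k}) => N j ω)
      (fun ω => (fun j : {j // ¬ j < k} => N j ω, fun j : {j // ¬ j < k} => X j ω)) P := by
  rw [IndepFun_iff_Indep, ← past_sup_past_eq_comap, sup_comm, MeasurableSpace.comap_process_pi,
    iSup_subtype]
  exact indep_biSup_of_indep_past (t := {j | j < k}) (fun i => (h.measurable_N i).comap_le)
    h.indep (comap_le_past_sup_past X N)
    (sup_le (iSup₂_le fun j _ => (h.measurable_X j).comap_le)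
      (iSup₂_le fun j _ => (h.measurable_N j).comap_le))
    fun i hi => sup_le_sup (past_anti X hi) (past_anti N hi)

lemma identDistrib_path_N {X' : ℕ → Ω' → S₁} {N' : ℕ → Ω' → G} [IsProbabilityMeasure P']
    (h : IsInnovation P X N) (h' : IsInnovation P' X' N')
    (hlaw : ∀ k, P.map (N k) = P'.map (N' k)) :
    IdentDistrib (fun ω k => N k ω) (fun ω k => N' k ω) P P' :=
  IdentDistrib.pi (fun k => ⟨(h.measurable_N k).aemeasurable, (h'.measurable_N k).aemeasurable,
    hlaw k⟩) h.iIndepFun_N h'.iIndepFun_N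

variable {Y₁ : ℕ → Ω → S₁} {Y₂ : ℕ → Ω → S₂} [StandardBorelSpace S₁] [Nonempty S₁]
  [StandardBorelSpace S₂] [Nonempty S₂] {κ₁ : Kernel (ℕ → G) (ℕ → S₁)} [IsMarkovKernel κ₁]
  {κ₂ : Kernel (ℕ → G) (ℕ → S₂)} [IsMarkovKernel κ₂]

lemma indepFun_head_tail_of_hasCondDistrib_prod (h₁ : IsInnovation P Y₁ N)
    (h₂ : IsInnovation P Y₂ N)
    (hY : HasCondDistrib (fun ω => ((fun k => Y₁ k ω), fun k => Y₂ k ω)) (fun ω k => N k ω)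
      (κ₁ ×ₖ κ₂) P) (k : ℕ) :
    IndepFun (fun ω (j : {j // j < k}) => N j ω)
      (fun ω => (fun j : {j // ¬ j < k} => N j ω, fun j : {j // ¬ j < k} => Y₁ j ω,
        fun j : {j // ¬ j < k} => Y₂ j ω)) P := by
  let split := MeasurableEquiv.piEquivPiSubtypeProd (fun _ : ℕ => G) (· < k)
  have hr₁ : Measurable fun (y : ℕ → S₁) (j : {j // ¬ j < k}) => y j := by fun_prop
  have hr₂ : Measurable fun (y : ℕ → S₂) (j : {j // ¬ j < k}) => y j := by fun_prop
  have hcond := (hY.comp_left (hr₁.prodMap hr₂)).measurableEquiv_comp_right split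
  rw [← Kernel.map_prod_map _ _ hr₁ hr₂, Kernel.comap_prod] at hcond
  have := Kernel.IsMarkovKernel.map κ₁ hr₁
  have := Kernel.IsMarkovKernel.map κ₂ hr₂
  exact indepFun_prodMk_prodMk_of_hasCondDistrib_prod hcond (h₁.indepFun_head_tail k)
    (h₂.indepFun_head_tail k)

lemma indep_past_sup_past_sup_past (h₁ : IsInnovation P Y₁ N) (h₂ : IsInnovation P Y₂ N)
    (hY : HasCondDistrib (fun ω => ((fun k => Y₁ k ω), fun k => Y₂ k ω)) (fun ω k => N k ω)
      (κ₁ ×ₖ κ₂) P) (k : ℕ) :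
    Indep (MeasurableSpace.comap (N k) inferInstance)
      (past Y₁ (k + 1) ⊔ past Y₂ (k + 1) ⊔ past N (k + 1)) P := by
  rw [sup_comm, past_sup_past_eq_comap, past_eq_comap, ← MeasurableSpace.comap_prodMk]
  exact (h₁.indepFun_head_tail_of_hasCondDistrib_prod h₂ hY (k + 1)).comp
    (measurable_pi_apply ⟨k, k.lt_succ_self⟩) measurable_id

end IsInnovation

universe u₁ u₂

theorem tsirelson_conditionally_independent_coupling_general
    {S₁ : Type u₁} {S₂ : Type u₂} {G : Type v}
    [MeasurableSpace S₁] [StandardBorelSpace S₁] [MeasurableSpace S₂] [StandardBorelSpace S₂]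
    [MeasurableSpace G]
    {Ω₁ : Type w} [MeasurableSpace Ω₁] {P₁ : Measure Ω₁} [IsProbabilityMeasure P₁]
    {X₁ : ℕ → Ω₁ → S₁} {N₁ : ℕ → Ω₁ → G} (h₁ : IsInnovation P₁ X₁ N₁)
    {Ω₂ : Type w₂} [MeasurableSpace Ω₂] {P₂ : Measure Ω₂} [IsProbabilityMeasure P₂]
    {X₂ : ℕ → Ω₂ → S₂} {N₂ : ℕ → Ω₂ → G} (h₂ : IsInnovation P₂ X₂ N₂)
    (hlaw : ∀ k, P₁.map (N₁ k) = P₂.map (N₂ k)) :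
    ∃ (Ω : Type (max u₁ u₂ v)) (_ : MeasurableSpace Ω) (P : Measure Ω)
      (Y₁ : ℕ → Ω → S₁) (Y₂ : ℕ → Ω → S₂) (M : ℕ → Ω → G),
      IsProbabilityMeasure P ∧
      (∀ k, Measurable (Y₁ k)) ∧ (∀ k, Measurable (Y₂ k)) ∧ (∀ k, Measurable (M k)) ∧
      jointLaw P Y₁ M = jointLaw P₁ X₁ N₁ ∧
      jointLaw P Y₂ M = jointLaw P₂ X₂ N₂ ∧
      (∀ k, Indep (MeasurableSpace.comap (M k) inferInstance)
        (past Y₁ (k + 1) ⊔ past Y₂ (k + 1) ⊔ past M (k + 1)) P) ∧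
      (∀ A B : Set Ω, MeasurableSet[past Y₁ 0] A → MeasurableSet[past Y₂ 0] B →
        P⟦A ∩ B | past M 0⟧ =ᵐ[P] fun ω => (P⟦A | past M 0⟧) ω * (P⟦B | past M 0⟧) ω) := by
  have : Nonempty S₁ := (nonempty_of_isProbabilityMeasure P₁).map (X₁ 0)
  have : Nonempty S₂ := (nonempty_of_isProbabilityMeasure P₂).map (X₂ 0)
  let P := condIndepCoupling P₁ (fun ω k => N₁ k ω) (fun ω k => X₁ k ω)
    P₂ (fun ω k => N₂ k ω) (fun ω k => X₂ k ω)
  have hP : IsProbabilityMeasure P :=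
    isProbabilityMeasure_condIndepCoupling h₁.measurable_path_N.aemeasurable
  let M := fun k (p : (ℕ → G) × (ℕ → S₁) × (ℕ → S₂)) => p.1 k
  let Y₁ := fun k (p : (ℕ → G) × (ℕ → S₁) × (ℕ → S₂)) => p.2.1 k
  let Y₂ := fun k (p : (ℕ → G) × (ℕ → S₁) × (ℕ → S₂)) => p.2.2 k
  have hid₁ : IdentDistrib (fun p => ((fun k => M k p), fun k => Y₁ k p))
      (fun ω => ((fun k => N₁ k ω), fun k => X₁ k ω)) P P₁ :=
    identDistrib_condIndepCoupling_left h₁.measurable_path_N.aemeasurable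
      h₁.measurable_path_X.aemeasurable
  have hid₂ : IdentDistrib (fun p => ((fun k => M k p), fun k => Y₂ k p))
      (fun ω => ((fun k => N₂ k ω), fun k => X₂ k ω)) P P₂ :=
    identDistrib_condIndepCoupling_right (h₁.identDistrib_path_N h₂ hlaw)
      h₂.measurable_path_X.aemeasurable
  have hM : ∀ k, Measurable (M k) := by fun_prop
  have hY₁ : IsInnovation P Y₁ M := h₁.of_identDistrib (by fun_prop) hM hid₁
  have hY₂ : IsInnovation P Y₂ M := h₂.of_identDistrib (by fun_prop) hM hid₂
  exact ⟨_, inferInstance, P, Y₁, Y₂, M, hP, hY₁.measurable_X, hY₂.measurable_X, hM,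
    (hid₁.comp measurable_swap).map_eq, (hid₂.comp measurable_swap).map_eq,
    hY₁.indep_past_sup_past_sup_past hY₂ hasCondDistrib_snd_condIndepCoupling,
    fun _ _ => condExp_indicator_inter_past_ae_eq_mul hM hY₁.measurable_X hY₂.measurable_X
      hasCondDistrib_snd_condIndepCoupling⟩

section Tsirelson

variable {S : Type u} {G : Type v}
  [TopologicalSpace S] [CompactSpace S] [TopologicalSpace.MetrizableSpace S]
  [SecondCountableTopology S] [MeasurableSpace S] [BorelSpace S]
  [TopologicalSpace G] [CompactSpace G] [TopologicalSpace.MetrizableSpace G]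
  [SecondCountableTopology G] [MeasurableSpace G] [BorelSpace G]
  [Semigroup G] [ContinuousMul G]
  [SMul G S] [ContinuousSMul G S] [IsScalarTower G G S]

/-- Any two solutions admit a conditionally independent coupling:
a triple `(X̃¹, X̃², Ñ)` such that `(X̃ⁱ, Ñ)` has the law of the `i`-th solution, each `Ñ_k`
is independent of the past of `(X̃¹, X̃², Ñ)`, and `X̃¹, X̃²` are conditionally independent
given `σ(Ñ)` (expressed via conditional expectations of indicators). -/
theorem tsirelson_conditionally_independent_coupling
    (μ : ℕ → Measure G) (hμ : ∀ k, IsProbabilityMeasure (μ k))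
    {Ω₁ : Type w} [MeasurableSpace Ω₁] (P₁ : Measure Ω₁) [IsProbabilityMeasure P₁]
    (X₁ : ℕ → Ω₁ → S) (N₁ : ℕ → Ω₁ → G) (hsol₁ : IsSolution P₁ μ X₁ N₁)
    {Ω₂ : Type w₂} [MeasurableSpace Ω₂] (P₂ : Measure Ω₂) [IsProbabilityMeasure P₂]
    (X₂ : ℕ → Ω₂ → S) (N₂ : ℕ → Ω₂ → G) (hsol₂ : IsSolution P₂ μ X₂ N₂) :
    ∃ (Ω : Type (max u v)) (_ : MeasurableSpace Ω) (P : Measure Ω)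
      (Y₁ Y₂ : ℕ → Ω → S) (M : ℕ → Ω → G),
      IsProbabilityMeasure P ∧
      (∀ k, Measurable (Y₁ k)) ∧ (∀ k, Measurable (Y₂ k)) ∧ (∀ k, Measurable (M k)) ∧
      -- (1) the couplings have the right laws
      jointLaw P Y₁ M = jointLaw P₁ X₁ N₁ ∧
      jointLaw P Y₂ M = jointLaw P₂ X₂ N₂ ∧
      -- (2) each `M k` is independent of the past of `(Y₁, Y₂, M)`
      (∀ k, Indep (MeasurableSpace.comap (M k) inferInstance)
        (past Y₁ (k + 1) ⊔ past Y₂ (k + 1) ⊔ past M (k + 1)) P) ∧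
      -- (3) `Y₁` and `Y₂` are conditionally independent given `σ(M)`
      (∀ A B : Set Ω, MeasurableSet[past Y₁ 0] A → MeasurableSet[past Y₂ 0] B →
        P[(A ∩ B).indicator (fun _ => (1 : ℝ)) | past M 0] =ᵐ[P]
          fun ω => (P[A.indicator (fun _ => (1 : ℝ)) | past M 0]) ω *
            (P[B.indicator (fun _ => (1 : ℝ)) | past M 0]) ω) := by
  have : PolishSpace S := by
    let := TopologicalSpace.metrizableSpaceMetric S
    infer_instance
  exact tsirelson_conditionally_independent_coupling_general hsol₁.isInnovation hsol₂.isInnovation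
    fun k => (hsol₁.law_N k).trans (hsol₂.law_N k).symm

end Tsirelson
end

section
/- Suppose that for each k ∈ -ℕ there exists a Borel probability measure ν_k on Σ such that the convolution μ_k * μ_{k-1} * ⋯ * μ_{l+1} converges weakly to ν_k as l → -∞. Then every extreme point (λ_k)_{k∈-ℕ} of the convex set P^cvl_μ of solutions of the convolution equation λ_k = μ_k * λ_{k-1} (k ∈ -ℕ) can be represented as λ_k = ν_k * δ_x for all k ∈ -ℕ, for some x ∈ S. -/
open MeasureTheory ProbabilityTheory Filter Topology
open scoped NNReal ENNReal

universe u v w w₂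

section Tsirelson

variable {S : Type u} {G : Type v}
  [TopologicalSpace S] [CompactSpace S] [TopologicalSpace.MetrizableSpace S]
  [SecondCountableTopology S] [MeasurableSpace S] [BorelSpace S]
  [TopologicalSpace G] [CompactSpace G] [TopologicalSpace.MetrizableSpace G]
  [SecondCountableTopology G] [MeasurableSpace G] [BorelSpace G]
  [Semigroup G] [ContinuousMul G]
  [SMul G S] [ContinuousSMul G S] [IsScalarTower G G S]

/-!
Write `T p` for the family `(ν_k * p)_k` and `μ_{k,l}` for `μ_k * μ_{k-1} * ⋯ * μ_{l+1}`. Letting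
`l → -∞` in `μ_{k,l} * p = μ_k * (μ_{k-1,l} * p)` shows that `T p` is a solution for every
probability measure `p` on `S`. Conversely, a solution satisfies `λ_k = μ_{k,l} * λ_l`, and letting
`l → -∞` along an ultrafilter, along which `λ_l` converges weakly to some `m`, gives `λ = T m`.
So the solutions are exactly the image of `P(S)` under the affine map `T`.

If `T m` is extreme, splitting `m` into its conditional laws on `A` and `Aᶜ` shows that
`T (m[|A]) = T m` whenever `m A ≠ 0`. As `A` shrinks to a point `x` of the support of `m`, the
laws `m[|A]` converge weakly to `δ_x`, whence `T m = T δ_x` by continuity.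
-/

open TopologicalSpace (PseudoMetrizableSpace)

section Convolution

variable {M X : Type*} [MeasurableSpace M] [MeasurableSpace X] [SMul M X]

theorem conv_smul (μ : Measure M) (c : ℝ≥0∞) (ρ : Measure X) [SFinite ρ] :
    conv μ (c • ρ) = c • conv μ ρ := by
  rw [conv, Measure.prod_smul_right, Measure.map_smul, conv]

variable [MeasurableSMul₂ M X]

theorem conv_add (μ : Measure M) (ρ₁ ρ₂ : Measure X) [SFinite μ] [SFinite ρ₁] [SFinite ρ₂] :
    conv μ (ρ₁ + ρ₂) = conv μ ρ₁ + conv μ ρ₂ := by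
  rw [conv, Measure.prod_add, Measure.map_add _ _ (by fun_prop), conv, conv]

theorem lintegral_conv {μ : Measure M} {ρ : Measure X} [SFinite ρ] {f : X → ℝ≥0∞}
    (hf : Measurable f) : ∫⁻ x, f x ∂conv μ ρ = ∫⁻ a, ∫⁻ x, f (a • x) ∂ρ ∂μ := by
  rw [conv, lintegral_map hf (by fun_prop), lintegral_prod _ (by fun_prop)]

theorem conv_convG [Mul M] [MeasurableMul₂ M] [IsScalarTower M M X] (μ₁ μ₂ : Measure M)
    (ρ : Measure X) [SFinite μ₂] [SFinite ρ] :
    conv (convG μ₁ μ₂) ρ = conv μ₁ (conv μ₂ ρ) := by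
  have : SFinite (conv μ₂ ρ) := inferInstanceAs (SFinite (Measure.map _ _))
  refine Measure.ext_of_lintegral _ fun f hf ↦ ?_
  calc ∫⁻ x, f x ∂conv (convG μ₁ μ₂) ρ
      = ∫⁻ a, ∫⁻ b, ∫⁻ x, f ((a * b) • x) ∂ρ ∂μ₂ ∂μ₁ := by
        rw [lintegral_conv hf]
        exact lintegral_conv (X := M) (by fun_prop)
    _ = ∫⁻ a, ∫⁻ b, ∫⁻ x, f (a • b • x) ∂ρ ∂μ₂ ∂μ₁ := by
        simp only [← smul_eq_mul, smul_assoc]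
    _ = ∫⁻ x, f x ∂conv μ₁ (conv μ₂ ρ) := by
        rw [lintegral_conv hf]
        exact lintegral_congr fun a ↦ (lintegral_conv (hf.comp (measurable_const_smul a))).symm

instance isProbabilityMeasure_conv (μ : Measure M) (ρ : Measure X) [IsProbabilityMeasure μ]
    [IsProbabilityMeasure ρ] : IsProbabilityMeasure (conv μ ρ) :=
  Measure.isProbabilityMeasure_map (by fun_prop)

end Convolution

section IteratedConvolution

variable {M : Type*} [MeasurableSpace M]

instance isProbabilityMeasure_convIter [Mul M] [MeasurableMul₂ M] (μ : ℕ → Measure M)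
    [∀ k, IsProbabilityMeasure (μ k)] (n j : ℕ) : IsProbabilityMeasure (convIter μ n j) := by
  induction j with
  | zero => exact inferInstanceAs (IsProbabilityMeasure (μ n))
  | succ j ih => exact isProbabilityMeasure_conv (X := M) (convIter μ n j) (μ (n + j + 1))

instance sFinite_convIter [Mul M] (μ : ℕ → Measure M) [∀ k, SFinite (μ k)] (n j : ℕ) :
    SFinite (convIter μ n j) := by
  induction j with
  | zero => exact inferInstanceAs (SFinite (μ n))
  | succ j ih => exact inferInstanceAs (SFinite (Measure.map _ _))

theorem convIter_succ_eq_convG_convIter [Semigroup M] [MeasurableMul₂ M] (μ : ℕ → Measure M)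
    [∀ k, SFinite (μ k)] (n j : ℕ) :
    convIter μ n (j + 1) = convG (μ n) (convIter μ (n + 1) j) := by
  induction j with
  | zero => rfl
  | succ j ih =>
    rw [convIter, ih, convIter, show n + (j + 1) + 1 = n + 1 + j + 1 by lia]
    exact conv_convG (X := M) _ _ _

end IteratedConvolution

section Solutions

variable {M X : Type*} [MeasurableSpace M] [MeasurableSpace X] [SMul M X]

/-- The set `P^cvl_μ` of solutions `(λ_k)` of the convolution equation `λ_k = μ_k * λ_{k-1}`. As in
`IsSolution`, the index `k : ℕ` stands for the time `-k`. -/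
def convSolutions (μ : ℕ → Measure M) : Set (ℕ → Measure X) :=
  {lam | (∀ k, IsProbabilityMeasure (lam k)) ∧ ∀ k, lam k = conv (μ k) (lam (k + 1))}

theorem mem_extremePoints_convSolutions_iff {μ : ℕ → Measure M} {lam : ℕ → Measure X} :
    lam ∈ (convSolutions μ).extremePoints ℝ≥0 ↔ lam ∈ convSolutions μ ∧
      ∀ (c : ℝ≥0), 0 < c → c < 1 → ∀ lam₁ ∈ convSolutions μ, ∀ lam₂ ∈ convSolutions μ,
        (∀ k, lam k = c • lam₁ k + (1 - c) • lam₂ k) → lam₁ = lam ∧ lam₂ = lam := by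
  rw [mem_extremePoints]
  refine and_congr_right fun _ ↦ ⟨fun h c hc0 hc1 lam₁ h₁ lam₂ h₂ hlam ↦ h lam₁ h₁ lam₂ h₂ ?_,
    fun h lam₁ h₁ lam₂ h₂ hlam ↦ ?_⟩
  · exact ⟨c, 1 - c, hc0, tsub_pos_of_lt hc1, add_tsub_cancel_of_le hc1.le,
      (funext hlam).symm⟩
  · obtain ⟨c, d, hc, hd, hcd, rfl⟩ := hlam
    obtain rfl : d = 1 - c := eq_tsub_of_add_eq (by rwa [add_comm])
    exact h c hc (tsub_pos_iff_lt.1 hd) lam₁ h₁ lam₂ h₂ fun _ ↦ rfl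

theorem eq_conv_convIter_of_mem_convSolutions [Mul M] [MeasurableMul₂ M] [MeasurableSMul₂ M X]
    [IsScalarTower M M X] {μ : ℕ → Measure M} [∀ k, SFinite (μ k)] {lam : ℕ → Measure X}
    (hlam : lam ∈ convSolutions μ) (n j : ℕ) :
    lam n = conv (convIter μ n j) (lam (n + j + 1)) := by
  obtain ⟨hprob, heq⟩ := hlam
  induction j with
  | zero => exact heq n
  | succ j ih => rw [convIter, conv_convG, add_assoc n j 1, ← heq]; exact ih

end Solutions

section WeakConvergence

variable {X : Type*} [MeasurableSpace X] [TopologicalSpace X] [OpensMeasurableSpace X]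

theorem tendsto_diracProba_of_tendsto_smallSets {ι : Type*} {l : Filter ι} [l.IsCountablyGenerated]
    {x : X} {U : ι → Set X} (hU : Tendsto U l (𝓝 x).smallSets) {p : ι → ProbabilityMeasure X}
    (hp : ∀ i, (p i : Measure X) (U i) = 1) : Tendsto p l (𝓝 (diracProba x)) := by
  refine tendsto_of_forall_isOpen_le_liminf' fun V hV ↦ ?_
  by_cases hx : x ∈ V
  · rw [diracProba_toMeasure_apply_of_mem hx]
    refine le_liminf_of_le (by isBoundedDefault) ?_
    filter_upwards [tendsto_smallSets_iff.1 hU V (hV.mem_nhds hx)] with i hi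
    exact (hp i).symm.trans_le (measure_mono hi)
  · simp [diracProba_toMeasure_apply' x hV.measurableSet, hx]

theorem exists_tendsto_cond_diracProba [FirstCountableTopology X] (m : Measure X)
    [IsFiniteMeasure m] {x : X} (hx : x ∈ m.support) :
    ∃ p : ℕ → ProbabilityMeasure X, Tendsto p atTop (𝓝 (diracProba x)) ∧
      ∀ i, ∃ A, MeasurableSet A ∧ m A ≠ 0 ∧ (p i : Measure X) = m[|A] := by
  obtain ⟨U, hU, hbasis⟩ := (nhds_basis_opens x).exists_antitone_subbasis
  have hpos i : m (U i) ≠ 0 :=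
    ((Measure.mem_support_iff_forall x).1 hx _ (hbasis.1.mem_of_mem trivial)).ne'
  refine ⟨fun i ↦ ⟨m[|U i], cond_isProbabilityMeasure (hpos i)⟩, ?_,
    fun i ↦ ⟨U i, (hU i).2.measurableSet, hpos i, rfl⟩⟩
  exact tendsto_diracProba_of_tendsto_smallSets hbasis.tendsto_smallSets
    fun i ↦ cond_apply_self (hpos i) (measure_ne_top _ _)

end WeakConvergence

section ProbabilityConvolution

variable {M X : Type*} [MeasurableSpace M] [MeasurableSpace X]

/-- The convolution `conv`, bundled as an operation on probability measures so that its continuity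
for the topologies of weak convergence can be expressed. -/
noncomputable def probConv [SMul M X] [MeasurableSMul₂ M X] (μ : ProbabilityMeasure M)
    (ρ : ProbabilityMeasure X) : ProbabilityMeasure X :=
  ⟨conv (μ : Measure M) (ρ : Measure X), inferInstance⟩

/-- The iterated convolution `convIter`, bundled as a probability measure so that its weak
convergence can be expressed. -/
noncomputable def probConvIter [Mul M] [MeasurableMul₂ M] (μ : ℕ → ProbabilityMeasure M)
    (n j : ℕ) : ProbabilityMeasure M :=
  ⟨convIter (fun k ↦ (μ k : Measure M)) n j, inferInstance⟩

/-- The family `(ν_k * p)_k`, denoted `T p` above. Its members are plain measures, so that it can be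
compared with elements of `convSolutions`. -/
noncomputable def convFamily {ι : Type*} [SMul M X] (ν : ι → ProbabilityMeasure M)
    (p : ProbabilityMeasure X) (k : ι) : Measure X :=
  conv (ν k : Measure M) (p : Measure X)

theorem probConv_probConvIter_succ [Semigroup M] [MeasurableMul₂ M] [SMul M X]
    [MeasurableSMul₂ M X] [IsScalarTower M M X] (μ : ℕ → ProbabilityMeasure M) (n j : ℕ)
    (ρ : ProbabilityMeasure X) :
    probConv (probConvIter μ n (j + 1)) ρ =
      probConv (μ n) (probConv (probConvIter μ (n + 1) j) ρ) := by
  apply Subtype.ext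
  change conv (convIter _ n (j + 1)) _ = conv _ (conv (convIter _ (n + 1) j) _)
  rw [convIter_succ_eq_convG_convIter, conv_convG]

variable [TopologicalSpace M] [SecondCountableTopology M] [PseudoMetrizableSpace M]
  [OpensMeasurableSpace M] [TopologicalSpace X] [SecondCountableTopology X]
  [PseudoMetrizableSpace X] [BorelSpace X] [SMul M X] [ContinuousSMul M X]

theorem tendsto_probConv {ι : Type*} {l : Filter ι} {μ : ι → ProbabilityMeasure M}
    {ρ : ι → ProbabilityMeasure X} {μ₀ : ProbabilityMeasure M} {ρ₀ : ProbabilityMeasure X}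
    (hμ : Tendsto μ l (𝓝 μ₀)) (hρ : Tendsto ρ l (𝓝 ρ₀)) :
    Tendsto (fun i ↦ probConv (μ i) (ρ i)) l (𝓝 (probConv μ₀ ρ₀)) :=
  ProbabilityMeasure.tendsto_map_of_tendsto_of_continuous _ _
    ((ProbabilityMeasure.continuous_prod.tendsto _).comp (hμ.prodMk_nhds hρ)) continuous_smul

end ProbabilityConvolution

section WeakLimit

variable {M X : Type*} [MeasurableSpace M] [MeasurableSpace X]
  [TopologicalSpace M] [SecondCountableTopology M] [PseudoMetrizableSpace M]
  [OpensMeasurableSpace M] [TopologicalSpace X] [SecondCountableTopology X]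
  [BorelSpace X] [SMul M X] [ContinuousSMul M X]
  {μ ν : ℕ → ProbabilityMeasure M}

theorem convFamily_mem_convSolutions [PseudoMetrizableSpace X] [Semigroup M] [MeasurableMul₂ M]
    [IsScalarTower M M X] (hν : ∀ n, Tendsto (probConvIter μ n) atTop (𝓝 (ν n)))
    (p : ProbabilityMeasure X) :
    convFamily ν p ∈ convSolutions fun k ↦ (μ k : Measure M) := by
  refine ⟨fun k ↦ isProbabilityMeasure_conv _ _, fun n ↦ ?_⟩
  suffices h : probConv (ν n) p = probConv (μ n) (probConv (ν (n + 1)) p) from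
    congrArg Subtype.val h
  have hleft : Tendsto (fun j ↦ probConv (probConvIter μ n (j + 1)) p) atTop
      (𝓝 (probConv (ν n) p)) :=
    tendsto_probConv ((hν n).comp (tendsto_add_atTop_nat 1)) tendsto_const_nhds
  have hright : Tendsto (fun j ↦ probConv (μ n) (probConv (probConvIter μ (n + 1) j) p)) atTop
      (𝓝 (probConv (μ n) (probConv (ν (n + 1)) p))) :=
    tendsto_probConv tendsto_const_nhds (tendsto_probConv (hν (n + 1)) tendsto_const_nhds)
  simp only [probConv_probConvIter_succ] at hleft
  exact tendsto_nhds_unique hleft hright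

theorem exists_eq_convFamily_of_mem_convSolutions [T2Space X] [CompactSpace X] [Mul M]
    [MeasurableMul₂ M] [IsScalarTower M M X]
    (hν : ∀ n, Tendsto (probConvIter μ n) atTop (𝓝 (ν n))) {lam : ℕ → Measure X}
    (hlam : lam ∈ convSolutions (fun k ↦ (μ k : Measure M))) :
    ∃ m : ProbabilityMeasure X, lam = convFamily ν m := by
  let lamP (k : ℕ) : ProbabilityMeasure X := ⟨lam k, hlam.1 k⟩
  obtain ⟨m, hm⟩ : ∃ m, Tendsto lamP (hyperfilter ℕ) (𝓝 m) :=
    ⟨_, ((hyperfilter ℕ).map lamP).le_nhds_lim⟩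
  refine ⟨m, funext fun n ↦ ?_⟩
  suffices h : lamP n = probConv (ν n) m from congrArg Subtype.val h
  have hiter : Tendsto (fun l ↦ probConvIter μ n (l - (n + 1))) (hyperfilter ℕ) (𝓝 (ν n)) :=
    ((hν n).comp (tendsto_sub_atTop_nat (n + 1))).mono_left Nat.hyperfilter_le_atTop
  refine tendsto_nhds_unique (tendsto_const_nhds.congr' ?_) (tendsto_probConv hiter hm)
  filter_upwards [Nat.hyperfilter_le_atTop (eventually_ge_atTop (n + 1))] with l hl
  have hl_eq := eq_conv_convIter_of_mem_convSolutions hlam n (l - (n + 1))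
  rw [show n + (l - (n + 1)) + 1 = l by lia] at hl_eq
  exact Subtype.ext hl_eq

theorem convSolutions_eq_range_convFamily [T2Space X] [CompactSpace X] [Semigroup M]
    [MeasurableMul₂ M] [IsScalarTower M M X]
    (hν : ∀ n, Tendsto (probConvIter μ n) atTop (𝓝 (ν n))) :
    convSolutions (fun k ↦ (μ k : Measure M)) = Set.range (convFamily (X := X) ν) := by
  refine Set.Subset.antisymm (fun lam hlam ↦ ?_)
    (Set.range_subset_iff.2 (convFamily_mem_convSolutions hν))
  obtain ⟨m, rfl⟩ := exists_eq_convFamily_of_mem_convSolutions hν hlam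
  exact Set.mem_range_self m

end WeakLimit

section ExtremePoints

variable {ι M X : Type*} [MeasurableSpace M] [MeasurableSpace X] [SMul M X]

theorem measure_smul_cond_add_measure_compl_smul_cond_compl (m : Measure X) [IsFiniteMeasure m]
    {A : Set X} (hA : MeasurableSet A) : m A • m[|A] + m Aᶜ • m[|Aᶜ] = m := by
  ext s _
  simpa [mul_comm] using cond_add_cond_compl_eq hA m (t := s)

theorem convFamily_cond_eq_of_mem_extremePoints [MeasurableSMul₂ M X]
    {ν : ι → ProbabilityMeasure M} {m p : ProbabilityMeasure X}
    (hm : convFamily ν m ∈ (Set.range (convFamily (X := X) ν)).extremePoints ℝ≥0)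
    {A : Set X} (hA : MeasurableSet A) (hmA : (m : Measure X) A ≠ 0)
    (hp : (p : Measure X) = (m : Measure X)[|A]) : convFamily ν p = convFamily ν m := by
  by_cases hmAc : (m : Measure X) Aᶜ = 0
  · have hpm : p = m := by
      apply Subtype.ext
      change (p : Measure X) = m
      rw [hp, ProbabilityTheory.cond, (prob_compl_eq_zero_iff hA).1 hmAc, inv_one, one_smul]
      exact Measure.restrict_eq_self_of_ae_mem hmAc
    rw [hpm]
  · let q : ProbabilityMeasure X := ⟨(m : Measure X)[|Aᶜ], cond_isProbabilityMeasure hmAc⟩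
    refine ((mem_extremePoints.1 hm).2 _ ⟨p, rfl⟩ _ ⟨q, rfl⟩ ⟨m A, m Aᶜ, ?_, ?_, ?_, ?_⟩).1
    · simpa [pos_iff_ne_zero, ProbabilityMeasure.null_iff_toMeasure_null] using hmA
    · simpa [pos_iff_ne_zero, ProbabilityMeasure.null_iff_toMeasure_null] using hmAc
    · rw [← ENNReal.coe_inj]
      simpa using prob_add_prob_compl (μ := (m : Measure X)) hA
    · funext k
      simp only [q, convFamily, Pi.add_apply, Pi.smul_apply, ProbabilityMeasure.coe_mk, hp,
        ENNReal.smul_def, ProbabilityMeasure.ennreal_coeFn_eq_coeFn_toMeasure]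
      rw [← conv_smul, ← conv_smul, ← conv_add,
        measure_smul_cond_add_measure_compl_smul_cond_compl _ hA]

theorem exists_eq_conv_dirac_of_mem_extremePoints [TopologicalSpace M] [SecondCountableTopology M]
    [PseudoMetrizableSpace M] [OpensMeasurableSpace M] [TopologicalSpace X]
    [SecondCountableTopology X] [PseudoMetrizableSpace X] [BorelSpace X] [ContinuousSMul M X]
    {ν : ι → ProbabilityMeasure M} {lam : ι → Measure X}
    (hlam : lam ∈ (Set.range (convFamily (X := X) ν)).extremePoints ℝ≥0) :
    ∃ x : X, ∀ k, lam k = conv (ν k : Measure M) (Measure.dirac x) := by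
  obtain ⟨m, rfl⟩ := hlam.1
  obtain ⟨x, hx⟩ := Measure.nonempty_support (IsProbabilityMeasure.ne_zero (m : Measure X))
  obtain ⟨p, hp, hcond⟩ := exists_tendsto_cond_diracProba (m : Measure X) hx
  refine ⟨x, fun k ↦ ?_⟩
  suffices h : probConv (ν k) m = probConv (ν k) (diracProba x) from congrArg Subtype.val h
  have hconst i : probConv (ν k) m = probConv (ν k) (p i) := by
    obtain ⟨A, hA, hmA, hpA⟩ := hcond i
    exact Subtype.ext
      (congrFun (convFamily_cond_eq_of_mem_extremePoints hlam hA hmA hpA) k).symm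
  exact tendsto_nhds_unique (tendsto_const_nhds.congr hconst)
    (tendsto_probConv tendsto_const_nhds hp)

end ExtremePoints

theorem tsirelson_extreme_convolution_solution_repr_general {M X : Type*}
    [TopologicalSpace M] [SecondCountableTopology M] [PseudoMetrizableSpace M] [MeasurableSpace M]
    [OpensMeasurableSpace M] [TopologicalSpace X] [T2Space X] [CompactSpace X]
    [SecondCountableTopology X] [MeasurableSpace X] [BorelSpace X] [Semigroup M] [MeasurableMul₂ M]
    [SMul M X] [ContinuousSMul M X] [IsScalarTower M M X] {μ ν : ℕ → ProbabilityMeasure M}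
    (hν : ∀ n, Tendsto (probConvIter μ n) atTop (𝓝 (ν n))) {lam : ℕ → Measure X}
    (hlam : lam ∈ (convSolutions fun k ↦ (μ k : Measure M)).extremePoints ℝ≥0) :
    ∃ x : X, ∀ k, lam k = conv (ν k : Measure M) (Measure.dirac x) := by
  rw [convSolutions_eq_range_convFamily hν] at hlam
  exact exists_eq_conv_dirac_of_mem_extremePoints hlam

/-- If the convolutions `μ_k * μ_{k-1} * ⋯ * μ_{l+1}` converge weakly as
`l → -∞` to probability measures `ν_k`, then every extreme point `(λ_k)` of the convex set
of solutions of the convolution equation `λ_k = μ_k * λ_{k-1}` is of the form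
`λ_k = ν_k * δ_x` for some `x ∈ S`. -/
theorem tsirelson_extreme_convolution_solution_repr
    (μ : ℕ → Measure G) (hμ : ∀ k, IsProbabilityMeasure (μ k))
    (ν : ℕ → Measure G) (hν : ∀ k, IsProbabilityMeasure (ν k))
    (hweak : ∀ (n : ℕ) (f : C(G, ℝ)),
      Tendsto (fun j => ∫ σ, f σ ∂(convIter μ n j)) atTop (𝓝 (∫ σ, f σ ∂(ν n))))
    (lam : ℕ → Measure S) (hlam : ∀ k, IsProbabilityMeasure (lam k))
    (hcvl : ∀ k, lam k = conv (μ k) (lam (k + 1)))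
    (hext : ∀ (c : ℝ≥0) (lam₁ lam₂ : ℕ → Measure S), 0 < c → c < 1 →
      (∀ k, IsProbabilityMeasure (lam₁ k)) → (∀ k, lam₁ k = conv (μ k) (lam₁ (k + 1))) →
      (∀ k, IsProbabilityMeasure (lam₂ k)) → (∀ k, lam₂ k = conv (μ k) (lam₂ (k + 1))) →
      (∀ k, lam k = c • lam₁ k + (1 - c) • lam₂ k) →
      lam₁ = lam ∧ lam₂ = lam) :
    ∃ x : S, ∀ k, lam k = conv (ν k) (Measure.dirac x) :=
  tsirelson_extreme_convolution_solution_repr_general (μ := fun k ↦ ⟨μ k, hμ k⟩)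
    (ν := fun k ↦ ⟨ν k, hν k⟩)
    (fun n ↦ ProbabilityMeasure.tendsto_iff_forall_integral_tendsto.2
      fun f ↦ hweak n f.toContinuousMap)
    (mem_extremePoints_convSolutions_iff.2 ⟨⟨hlam, hcvl⟩, fun c hc0 hc1 lam₁ h₁ lam₂ h₂ ↦
      hext c lam₁ lam₂ hc0 hc1 h₁.1 h₁.2 h₂.1 h₂.2⟩)

end Tsirelson
end

section
/- Suppose condition (P1') holds: for every k ∈ -ℕ, the random variable N_{k,l} = N_k N_{k-1} ⋯ N_{l+1} converges almost surely in Σ as l → -∞ (for some, equivalently any, solution with noise law μ). Then every extremal solution of Tsirelson's equation with noise law μ is strong. -/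
open MeasureTheory ProbabilityTheory Filter Topology
open scoped NNReal ENNReal

universe u v w w₂

section Tsirelson

variable {S : Type u} {G : Type v}
  [TopologicalSpace S] [CompactSpace S] [TopologicalSpace.MetrizableSpace S]
  [SecondCountableTopology S] [MeasurableSpace S] [BorelSpace S]
  [TopologicalSpace G] [CompactSpace G] [TopologicalSpace.MetrizableSpace G]
  [SecondCountableTopology G] [MeasurableSpace G] [BorelSpace G]
  [Semigroup G] [ContinuousMul G]
  [SMul G S] [ContinuousSMul G S] [IsScalarTower G G S]

/-!
Applied to a countable basis of the compact space, the zero-one law for tail events of `X` produces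
a *deterministic* point `z` which is almost surely a cluster point of `X_l` as `l → -∞`. In
`X_k = N_{k,l} X_l` let `l → -∞` along a (random) subsequence with `X_l → z`: by continuity of the
action `X_k = (lim N_{k,l}) z`. Since `z` is deterministic, this exhibits `X_k` as the almost sure
limit of the functionals `N_{k,l} z` of the noise.
-/

section Topology

variable {ι E F M : Type*} [TopologicalSpace E] [TopologicalSpace F] [TopologicalSpace M]
  {l : Filter ι}

theorem mapClusterPt_prodMk_of_tendsto {u : ι → F} {v : ι → E} {y : F} {z : E}
    (hu : Tendsto u l (𝓝 y)) (hv : MapClusterPt z l v) :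
    MapClusterPt (y, z) l (fun i => (u i, v i)) := by
  rw [((𝓝 y).basis_sets.prod_nhds (𝓝 z).basis_sets).mapClusterPt_iff_frequently]
  rintro ⟨s, t⟩ ⟨hs, ht⟩
  exact ((hv.frequently ht).and_eventually (hu hs)).mono fun i hi => ⟨hi.2, hi.1⟩

theorem smul_eq_of_tendsto_of_mapClusterPt [T1Space E] [SMul M E] [ContinuousSMul M E]
    {a : ι → M} {x : ι → E} {b : M} {z x₀ : E} (ha : Tendsto a l (𝓝 b))
    (hx : MapClusterPt z l x) (hax : ∀ i, a i • x i = x₀) : b • z = x₀ := by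
  have hcluster : MapClusterPt (b • z) l (fun i => a i • x i) :=
    (mapClusterPt_prodMk_of_tendsto ha hx).continuousAt_comp continuous_smul.continuousAt
  exact isClosed_singleton.mem_of_mapClusterPt hcluster (.of_forall hax)

end Topology

section Limit

variable {ι Ω E : Type*} [Countable ι] {l : Filter ι} [l.IsCountablyGenerated]
  [TopologicalSpace E] [PolishSpace E] [MeasurableSpace E] [BorelSpace E] [Nonempty E]
  {f : ι → Ω → E}

theorem measurable_limUnder {_ : MeasurableSpace Ω} (hf : ∀ i, Measurable (f i)) :
    Measurable fun ω => limUnder l (f · ω) :=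
  (StronglyMeasurable.limUnder fun i => (hf i).stronglyMeasurable).measurable

theorem exists_measurable_ae_eq_of_ae_tendsto [l.NeBot] {m m₀ : MeasurableSpace Ω}
    {P : Measure[m₀] Ω} {g : Ω → E} (hf : ∀ i, Measurable[m] (f i))
    (hlim : ∀ᵐ ω ∂P, Tendsto (fun i => f i ω) l (𝓝 (g ω))) :
    ∃ h : Ω → E, Measurable[m] h ∧ g =ᵐ[P] h :=
  ⟨fun ω => limUnder l (f · ω), measurable_limUnder hf,
    hlim.mono fun _ hω => hω.limUnder_eq.symm⟩

end Limit

section Tail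

variable {Ω E : Type*} [MeasurableSpace E] {X : ℕ → Ω → E}

theorem measurable_past_of_le {j k : ℕ} (hkj : k ≤ j) : Measurable[past X k] (X j) :=
  measurable_iff_comap_le.2 <|
    le_iSup₂_of_le (f := fun i (_ : i ≥ k) => MeasurableSpace.comap (X i) inferInstance)
      j hkj le_rfl

theorem measurableSet_iInf_past_frequently_mem {U : Set E} (hU : MeasurableSet U) :
    MeasurableSet[⨅ k, past X k] {ω | ∃ᶠ l in atTop, X l ω ∈ U} := by
  refine MeasurableSpace.measurableSet_iInf.2 fun k => ?_
  have hlimsup : {ω | ∃ᶠ l in atTop, X l ω ∈ U} = limsup (fun l => X (l + k) ⁻¹' U) atTop := by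
    ext ω
    rw [limsup_nat_add (fun l => X l ⁻¹' U) k, mem_limsup_iff_frequently_mem]
    rfl
  rw [hlimsup]
  exact @MeasurableSet.measurableSet_limsup Ω (past X k) _ fun l =>
    measurable_past_of_le (Nat.le_add_left k l) hU

variable [MeasurableSpace Ω] {P : Measure Ω}

theorem TailTrivial.mono {m₁ m₂ : ℕ → MeasurableSpace Ω} (h : TailTrivial P m₂)
    (hle : ∀ k, m₁ k ≤ m₂ k) : TailTrivial P m₁ :=
  fun A hA => h A (iInf_mono hle A hA)

variable [IsProbabilityMeasure P]

theorem TailTrivial.ae_frequently_mem_or_ae_not (htail : TailTrivial P (past X))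
    (hX : ∀ k, Measurable (X k)) {U : Set E} (hU : MeasurableSet U) :
    (∀ᵐ ω ∂P, ∃ᶠ l in atTop, X l ω ∈ U) ∨ ∀ᵐ ω ∂P, ¬ ∃ᶠ l in atTop, X l ω ∈ U := by
  have hmeas := measurableSet_iInf_past_frequently_mem (X := X) hU
  have hpast : past X 0 ≤ (inferInstance : MeasurableSpace Ω) :=
    iSup₂_le fun j _ => (hX j).comap_le
  rcases htail _ hmeas with hzero | hone
  · exact .inr (measure_eq_zero_iff_ae_notMem.1 hzero)
  · have hmeas₀ := hpast _ (MeasurableSpace.measurableSet_iInf.1 hmeas 0)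
    exact .inl ((mem_ae_iff_prob_eq_one hmeas₀).2 hone)

theorem TailTrivial.exists_ae_mapClusterPt [TopologicalSpace E] [CompactSpace E]
    [SecondCountableTopology E] [OpensMeasurableSpace E] (htail : TailTrivial P (past X))
    (hX : ∀ k, Measurable (X k)) :
    ∃ z, ∀ᵐ ω ∂P, MapClusterPt z atTop (fun l => X l ω) := by
  have hbasis := TopologicalSpace.isBasis_countableBasis E
  have hcountable := TopologicalSpace.countable_countableBasis E
  have hzeroOne : ∀ᵐ ω₀ ∂P, ∀ U ∈ TopologicalSpace.countableBasis E,
      (∃ᶠ l in atTop, X l ω₀ ∈ U) → ∀ᵐ ω ∂P, ∃ᶠ l in atTop, X l ω ∈ U := by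
    refine (ae_ball_iff hcountable).2 fun U hU => ?_
    rcases htail.ae_frequently_mem_or_ae_not hX (hbasis.isOpen hU).measurableSet with h | h
    · exact .of_forall fun _ _ => h
    · exact h.mono fun _ hnot hfreq => absurd hfreq hnot
  -- Any cluster point of a single typical path serves for almost every path.
  obtain ⟨ω₀, hω₀⟩ := hzeroOne.exists
  obtain ⟨z, hz⟩ : ∃ z, MapClusterPt z atTop (fun l => X l ω₀) :=
    exists_clusterPt_of_compactSpace _
  have hvisits : ∀ᵐ ω ∂P, ∀ U ∈ TopologicalSpace.countableBasis E,
      z ∈ U → ∃ᶠ l in atTop, X l ω ∈ U := by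
    simp only [ae_ball_iff hcountable, eventually_imp_distrib_left]
    exact fun U hU hzU => hω₀ U hU (hz.frequently (hbasis.mem_nhds hU hzU))
  refine ⟨z, hvisits.mono fun ω hω => ?_⟩
  exact hbasis.nhds_hasBasis.mapClusterPt_iff_frequently.2 fun U hU => hω U hU.1 hU.2

end Tail

section Recursion

variable {Ω E M : Type*} [Mul M] {X : ℕ → Ω → E} {N : ℕ → Ω → M}

theorem measurable_prodN [MeasurableSpace M] [MeasurableMul₂ M] (n j : ℕ) :
    Measurable[past N n] (prodN N n j) := by
  induction j with
  | zero => exact measurable_past_of_le le_rfl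
  | succ j ih => exact Measurable.mul (m := past N n) ih (measurable_past_of_le (by omega))

variable [SMul M E] [IsScalarTower M M E]

theorem prodN_smul_eq {ω : Ω} (heqn : ∀ k, X k ω = N k ω • X (k + 1) ω) (n j : ℕ) :
    prodN N n j ω • X (n + j + 1) ω = X n ω := by
  induction j with
  | zero => exact (heqn n).symm
  | succ j ih =>
    calc prodN N n (j + 1) ω • X (n + (j + 1) + 1) ω
        = prodN N n j ω • N (n + j + 1) ω • X (n + j + 1 + 1) ω :=
          smul_assoc (prodN N n j ω) (N (n + j + 1) ω) _
      _ = prodN N n j ω • X (n + j + 1) ω := by rw [← heqn (n + j + 1)]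
      _ = X n ω := ih

theorem tendsto_prodN_smul [TopologicalSpace E] [T1Space E] [TopologicalSpace M]
    [ContinuousSMul M E] {ω : Ω} {z : E} {n : ℕ} (heqn : ∀ k, X k ω = N k ω • X (k + 1) ω)
    (hz : MapClusterPt z atTop (fun l => X l ω))
    (hlim : ∃ y, Tendsto (fun j => prodN N n j ω) atTop (𝓝 y)) :
    Tendsto (fun j => prodN N n j ω • z) atTop (𝓝 (X n ω)) := by
  obtain ⟨y, hy⟩ := hlim
  have hz_shift : MapClusterPt z atTop (fun j => X (n + j + 1) ω) := by
    have hindex : ∀ j, n + j + 1 = j + (n + 1) := fun j => by omega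
    rw [← map_add_atTop_eq_nat (n + 1), ← mapClusterPt_comp] at hz
    simpa only [hindex, Function.comp_def] using hz
  rw [← smul_eq_of_tendsto_of_mapClusterPt hy hz_shift (prodN_smul_eq heqn n)]
  exact hy.smul_const z

end Recursion

theorem tsirelson_P1'_extremal_implies_strong_general {Ω E M : Type*}
    [TopologicalSpace E] [CompactSpace E] [TopologicalSpace.MetrizableSpace E]
    [MeasurableSpace E] [BorelSpace E]
    [TopologicalSpace M] [MeasurableSpace M] [OpensMeasurableSpace M]
    [Mul M] [MeasurableMul₂ M] [SMul M E] [ContinuousSMul M E] [IsScalarTower M M E]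
    [MeasurableSpace Ω] {P : Measure Ω} [IsProbabilityMeasure P]
    {X : ℕ → Ω → E} {N : ℕ → Ω → M} (hX : ∀ k, Measurable (X k))
    (heqn : ∀ k, X k =ᵐ[P] fun ω => N k ω • X (k + 1) ω)
    (hP1 : ∀ n, ∀ᵐ ω ∂P, ∃ y, Tendsto (fun j => prodN N n j ω) atTop (𝓝 y))
    (htail : TailTrivial P (past X)) :
    IsStrong P X N := by
  let _ := TopologicalSpace.metrizableSpaceMetric E
  obtain ⟨z, hz⟩ := htail.exists_ae_mapClusterPt hX
  have : Nonempty E := ⟨z⟩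
  intro n
  have hmeas : ∀ j, Measurable[past N n] fun ω => prodN N n j ω • z := fun j =>
    (continuous_id.smul continuous_const).measurable.comp (measurable_prodN n j)
  refine exists_measurable_ae_eq_of_ae_tendsto (l := atTop) hmeas ?_
  filter_upwards [ae_all_iff.2 heqn, hz, hP1 n] with ω hω_eqn hω_cluster hω_lim
  exact tendsto_prodN_smul hω_eqn hω_cluster hω_lim

/-- Under condition (P1') — a.s. convergence of the products
`N_{k,l} = N_k N_{k-1} ⋯ N_{l+1}` as `l → -∞` — every extremal solution is strong.
(Here `prodN N n j → ` as `j → ∞` encodes `N_{k,l} → ` as `l → -∞` for `k = -n`.) -/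
theorem tsirelson_P1'_extremal_implies_strong
    {Ω : Type w} [MeasurableSpace Ω] (P : Measure Ω) [IsProbabilityMeasure P]
    (μ : ℕ → Measure G) (hμ : ∀ k, IsProbabilityMeasure (μ k))
    (X : ℕ → Ω → S) (N : ℕ → Ω → G) (hsol : IsSolution P μ X N)
    (hP1 : ∀ n : ℕ, ∀ᵐ ω ∂P, ∃ y : G, Tendsto (fun j => prodN N n j ω) atTop (𝓝 y))
    (hext : TailTrivial P fun k => past X k ⊔ past N k) :
    IsStrong P X N :=
  tsirelson_P1'_extremal_implies_strong_general hsol.measurable_X hsol.eqn hP1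
    (hext.mono fun _ => le_sup_left)

end Tsirelson
end

section
/- Suppose condition (P2') holds: there exists a compact non-trivial subgroup H of Σ such that, for every k ∈ -ℕ, the law of N_{k,l} converges weakly as l → -∞ to a probability measure ν_k on Σ that is right H-invariant (invariant under σ ↦ σh for every h ∈ H), and the image of N_{k,l} in the coset space Σ/H (the quotient of Σ by the right action of H, with the quotient topology) converges a.s. as l → -∞. Suppose moreover that Σ is left-cancellative (στ₁ = στ₂ implies τ₁ = τ₂) and that every element of Σ has cancellative action on S (σx = σy implies x = y). Let {X,N} be an extremal solution such that, for each k ∈ -ℕ, the law of X_k equals ν_k * δ_x for some x ∈ S. If the orbit Hx := {hx : h ∈ H} is not a singleton, then the solution {X,N} is not strong. -/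
open MeasureTheory ProbabilityTheory Filter Topology
open scoped NNReal ENNReal

universe u v w w₂

section Tsirelson

variable {S : Type u} {G : Type v}
  [TopologicalSpace S] [CompactSpace S] [TopologicalSpace.MetrizableSpace S]
  [SecondCountableTopology S] [MeasurableSpace S] [BorelSpace S]
  [TopologicalSpace G] [CompactSpace G] [TopologicalSpace.MetrizableSpace G]
  [SecondCountableTopology G] [MeasurableSpace G] [BorelSpace G]
  [Semigroup G] [ContinuousMul G]
  [SMul G S] [ContinuousSMul G S] [IsScalarTower G G S]

/-- The right coset `σH`. -/
def rightCosetOf {G : Type*} [Mul G] (H : Set G) (σ : G) : Set G := (fun h => σ * h) '' H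

/-- The coset space `Σ/H`, as the quotient of `Σ` identifying elements with the same right
coset, equipped (automatically) with the quotient topology. -/
abbrev CosetSpace {G : Type*} [Mul G] (H : Set G) := Quotient (Setoid.ker (rightCosetOf H))

/-- Condition (P2'): `H` is a compact non-trivial subgroup of `Σ`; for every `k`, the law of
`N_{k,l}` converges weakly as `l → -∞` to a right `H`-invariant probability law `ν_k`, and the
image of `N_{k,l}` in `Σ/H` converges a.s. as `l → -∞`. -/
structure CondP2' {Ω G : Type*} [MeasurableSpace Ω] [TopologicalSpace G] [Semigroup G]
    [MeasurableSpace G] (P : Measure Ω) (N : ℕ → Ω → G) (H : Set G) (ν : ℕ → Measure G) :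
    Prop where
  compact : IsCompact H
  mul_mem : ∀ a ∈ H, ∀ b ∈ H, a * b ∈ H
  nontrivial : ∃ a ∈ H, ∃ b ∈ H, a ≠ b
  exists_identity_inverses : ∃ e ∈ H, (∀ h ∈ H, e * h = h ∧ h * e = h) ∧
    ∀ h ∈ H, ∃ h' ∈ H, h * h' = e ∧ h' * h = e
  prob_ν : ∀ k, IsProbabilityMeasure (ν k)
  right_invariant : ∀ k, ∀ h ∈ H, (ν k).map (fun σ => σ * h) = ν k
  weak_conv : ∀ (n : ℕ) (f : C(G, ℝ)),
    Tendsto (fun j => ∫ σ, f σ ∂(P.map (prodN N n j))) atTop (𝓝 (∫ σ, f σ ∂(ν n)))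
  coset_conv : ∀ n : ℕ, ∀ᵐ ω ∂P, ∃ q : CosetSpace H,
    Tendsto (fun j => Quotient.mk (Setoid.ker (rightCosetOf H)) (prodN N n j ω)) atTop (𝓝 q)

/-!
Suppose `X_n` were a function of `N_n, N_{n+1}, …` (index `m` is time `-m`). Then for bounded
measurable `f` the martingale `E[f(X_n) | N_n, …, N_{n+j}]` converges to `f(X_n)` in `L¹`. Since
`X_n = M_j X_{n+j+1}` with `M_j = N_n ⋯ N_{n+j}` independent of `X_{n+j+1}`, we may replace
`X_{n+j+1}` by any variable with the same law that is independent of the noise. By right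
`H`-invariance both `σ h₁ x` and `σ h₂ x`, with `σ` of law `ν_{n+j+1}`, are such variables, so
`f(M_j σ h₁ x) - f(M_j σ h₂ x) → 0` in `L¹`. But all the pairs `(τ h₁ x, τ h₂ x)`, `τ ∈ Σ`, lie in
one compact set which, by cancellativity of the action, misses the diagonal as soon as
`h₁ x ≠ h₂ x`; finitely many continuous functions separate the two coordinates of the points of
such a set uniformly, a contradiction.
-/

section Separation

variable {S : Type*} [TopologicalSpace S] [T35Space S] {K : Set (S × S)}

theorem exists_finset_half_lt_dist_of_isCompact_of_disjoint_diagonal (hK : IsCompact K)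
    (hdiag : Disjoint K (Set.diagonal S)) :
    ∃ F : Finset C(S, unitInterval), ∀ z ∈ K, ∃ f ∈ F, 1 / 2 < dist (f z.1) (f z.2) := by
  have hcover : K ⊆ ⋃ f : C(S, unitInterval), {z | 1 / 2 < dist (f z.1) (f z.2)} := by
    intro z hz
    have hne : z.1 ≠ z.2 := Set.disjoint_left.1 hdiag hz
    obtain ⟨f, hf, hf₁, hf₂⟩ :=
      CompletelyRegularSpace.completely_regular z.1 {z.2} isClosed_singleton hne
    have hdist : dist (f z.1) (f z.2) = 1 := by
      rw [hf₁, hf₂ rfl]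
      simp [Subtype.dist_eq]
    exact Set.mem_iUnion.2 ⟨⟨f, hf⟩, one_half_lt_one.trans_eq hdist.symm⟩
  obtain ⟨F, hF⟩ := hK.elim_finite_subcover _
    (fun f => isOpen_lt continuous_const (by fun_prop)) hcover
  exact ⟨F, fun z hz => by simpa using hF hz⟩

theorem not_forall_tendsto_lintegral_edist_of_isCompact_of_disjoint_diagonal
    [MeasurableSpace S] [OpensMeasurableSpace S] {E : Type*} [MeasurableSpace E]
    {ρ : ℕ → Measure E} [∀ j, IsProbabilityMeasure (ρ j)] {U V : ℕ → E → S}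
    (hU : ∀ j, Measurable (U j)) (hV : ∀ j, Measurable (V j)) (hK : IsCompact K)
    (hdiag : Disjoint K (Set.diagonal S)) (hUV : ∀ j z, (U j z, V j z) ∈ K) :
    ¬ ∀ f : C(S, unitInterval),
      Tendsto (fun j => ∫⁻ z, edist (f (U j z)) (f (V j z)) ∂(ρ j)) atTop (𝓝 0) := by
  intro hlim
  obtain ⟨F, hF⟩ := exists_finset_half_lt_dist_of_isCompact_of_disjoint_diagonal hK hdiag
  have hsum_lim : Tendsto (fun j => ∑ f ∈ F, ∫⁻ z, edist (f (U j z)) (f (V j z)) ∂(ρ j)) atTop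
      (𝓝 0) := by
    simpa only [Finset.sum_const_zero] using tendsto_finsetSum F fun f _ => hlim f
  have hsum_ge (j : ℕ) (z : E) :
      ENNReal.ofReal (1 / 2) ≤ ∑ f ∈ F, edist (f (U j z)) (f (V j z)) := by
    obtain ⟨f, hfF, hfz⟩ := hF _ (hUV j z)
    calc ENNReal.ofReal (1 / 2) ≤ edist (f (U j z)) (f (V j z)) := by
          rw [edist_dist]
          exact ENNReal.ofReal_le_ofReal hfz.le
      _ ≤ ∑ f ∈ F, edist (f (U j z)) (f (V j z)) :=
          Finset.single_le_sum (f := fun f : C(S, unitInterval) => edist (f (U j z)) (f (V j z)))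
            (fun _ _ => zero_le) hfF
  have hlintegral_ge (j : ℕ) :
      ENNReal.ofReal (1 / 2) ≤ ∑ f ∈ F, ∫⁻ z, edist (f (U j z)) (f (V j z)) ∂(ρ j) := by
    have hmeas (f : C(S, unitInterval)) : Measurable fun z => edist (f (U j z)) (f (V j z)) :=
      (f.continuous.measurable.comp (hU j)).edist (f.continuous.measurable.comp (hV j))
    rw [← lintegral_finsetSum F fun f _ => hmeas f]
    simpa using lintegral_mono (μ := ρ j) (hsum_ge j)
  simpa using ge_of_tendsto' hsum_lim hlintegral_ge

end Separation

section Independence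

variable {Ω : Type*}

theorem isPiSystem_image2_inter {s t : Set (Set Ω)} (hs : IsPiSystem s) (ht : IsPiSystem t) :
    IsPiSystem (Set.image2 (· ∩ ·) s t) := by
  rintro _ ⟨A, hA, B, hB, rfl⟩ _ ⟨A', hA', B', hB', rfl⟩ hne
  have hinter : A ∩ B ∩ (A' ∩ B') = A ∩ A' ∩ (B ∩ B') := Set.inter_inter_inter_comm ..
  rw [hinter] at hne ⊢
  exact ⟨_, hs A hA A' hA' hne.left, _, ht B hB B' hB' hne.right, rfl⟩

theorem sup_eq_generateFrom_image2_inter (m₁ m₂ : MeasurableSpace Ω) :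
    m₁ ⊔ m₂ = MeasurableSpace.generateFrom
      (Set.image2 (· ∩ ·) {A | MeasurableSet[m₁] A} {B | MeasurableSet[m₂] B}) := by
  refine le_antisymm (sup_le (fun A hA => ?_) fun B hB => ?_)
    (MeasurableSpace.generateFrom_le ?_)
  · exact MeasurableSpace.measurableSet_generateFrom
      ⟨A, hA, Set.univ, MeasurableSet.univ, Set.inter_univ A⟩
  · exact MeasurableSpace.measurableSet_generateFrom
      ⟨Set.univ, MeasurableSet.univ, B, hB, Set.univ_inter B⟩
  · rintro _ ⟨A, hA, B, hB, rfl⟩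
    exact MeasurableSet.inter (le_sup_left (b := m₂) _ hA) (le_sup_right (a := m₁) _ hB)

theorem indep_sup_left_of_indep_of_le {m₁ m₂ m₃ m mΩ : MeasurableSpace Ω} {P : Measure Ω}
    [IsZeroOrProbabilityMeasure P] (h₁ : m₁ ≤ mΩ) (h₂ : m₂ ≤ mΩ) (h₃ : m₃ ≤ mΩ) (h₂m : m₂ ≤ m)
    (h₃m : m₃ ≤ m) (h₁_indep : Indep m₁ m P) (h₂_indep : Indep m₂ m₃ P) :
    Indep (m₁ ⊔ m₂) m₃ P := by
  refine IndepSets.indep (sup_le h₁ h₂) h₃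
    (isPiSystem_image2_inter (@MeasurableSpace.isPiSystem_measurableSet Ω m₁)
      (@MeasurableSpace.isPiSystem_measurableSet Ω m₂))
    (@MeasurableSpace.isPiSystem_measurableSet Ω m₃) (sup_eq_generateFrom_image2_inter m₁ m₂)
    (@MeasurableSpace.generateFrom_measurableSet Ω m₃).symm ?_
  rw [IndepSets_iff]
  rintro _ C ⟨A, hA, B, hB, rfl⟩ hC
  rw [Indep_iff] at h₁_indep h₂_indep
  calc P (A ∩ B ∩ C) = P A * P (B ∩ C) := by
        rw [Set.inter_assoc, h₁_indep A (B ∩ C) hA ((h₂m _ hB).inter (h₃m _ hC))]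
    _ = P (A ∩ B) * P C := by rw [h₂_indep B C hB hC, h₁_indep A B hA (h₂m _ hB), mul_assoc]

variable {α β T : Type*} [MeasurableSpace Ω] [MeasurableSpace α] [MeasurableSpace β]
  [MeasurableSpace T] {P : Measure Ω} [IsFiniteMeasure P] {ν : Measure T} [SFinite ν]
  {W : Ω → α} {Y : Ω → β}

theorem map_prodMk_eq_map_prodMap_of_indepFun {a : T → β} (hWY : IndepFun W Y P)
    (hW : Measurable W) (hY : Measurable Y) (ha : Measurable a) (hlaw : ν.map a = P.map Y) :
    P.map (fun ω => (W ω, Y ω)) = (P.prod ν).map (Prod.map W a) := by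
  rw [hWY.map_prod_eq_prod_map_map hW.aemeasurable hY.aemeasurable, ← hlaw,
    Measure.map_prod_map P ν hW ha]

theorem lintegral_edist_le_two_mul_of_indepFun {E : Type*} [PseudoEMetricSpace E]
    [SecondCountableTopology E] [MeasurableSpace E] [OpensMeasurableSpace E] {a b : T → β}
    {F : α × β → E} {Z : α → E} (hWY : IndepFun W Y P) (hW : Measurable W) (hY : Measurable Y)
    (ha : Measurable a) (hb : Measurable b) (hlaw_a : ν.map a = P.map Y)
    (hlaw_b : ν.map b = P.map Y) (hF : Measurable F) (hZ : Measurable Z) :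
    ∫⁻ z, edist (F (W z.1, a z.2)) (F (W z.1, b z.2)) ∂(P.prod ν) ≤
      2 * ∫⁻ ω, edist (F (W ω, Y ω)) (Z (W ω)) ∂P := by
  have hFZ : Measurable fun p : α × β => edist (F p) (Z p.1) := hF.edist (hZ.comp measurable_fst)
  have lintegral_copy {c : T → β} (hc : Measurable c) (hlaw : ν.map c = P.map Y) :
      ∫⁻ z, edist (F (W z.1, c z.2)) (Z (W z.1)) ∂(P.prod ν) =
        ∫⁻ ω, edist (F (W ω, Y ω)) (Z (W ω)) ∂P := by
    have h := congrArg (fun m => ∫⁻ p, edist (F p) (Z p.1) ∂m)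
      (map_prodMk_eq_map_prodMap_of_indepFun hWY hW hY hc hlaw)
    simp only [lintegral_map hFZ (hW.prodMk hY), lintegral_map hFZ (hW.prodMap hc)] at h
    exact h.symm
  have hFa : Measurable fun z : Ω × T => edist (F (W z.1, a z.2)) (Z (W z.1)) :=
    hFZ.comp (hW.prodMap ha)
  calc ∫⁻ z, edist (F (W z.1, a z.2)) (F (W z.1, b z.2)) ∂(P.prod ν)
      ≤ ∫⁻ z, edist (F (W z.1, a z.2)) (Z (W z.1)) +
          edist (F (W z.1, b z.2)) (Z (W z.1)) ∂(P.prod ν) :=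
        lintegral_mono fun _ => edist_triangle_right ..
    _ = 2 * ∫⁻ ω, edist (F (W ω, Y ω)) (Z (W ω)) ∂P := by
        rw [lintegral_add_left hFa, lintegral_copy ha hlaw_a, lintegral_copy hb hlaw_b, two_mul]

end Independence

section Past

variable {Ω α : Type*} [MeasurableSpace α] {Y : ℕ → Ω → α}

theorem comap_le_past {k j : ℕ} (hkj : k ≤ j) :
    MeasurableSpace.comap (Y j) inferInstance ≤ past Y k :=
  le_iSup₂_of_le (f := fun j (_ : j ≥ k) => MeasurableSpace.comap (Y j) inferInstance) j hkj le_rfl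

theorem past_antitone : Antitone (past Y) := fun _ _ hkl =>
  iSup₂_le fun _ hj => comap_le_past (hkl.trans hj)

variable {mΩ : MeasurableSpace Ω}

theorem past_le (hY : ∀ k, Measurable (Y k)) (k : ℕ) : past Y k ≤ mΩ :=
  iSup₂_le fun j _ => (hY j).comap_le

/-- The filtration whose `j`-th σ-field is `σ(Y_n, …, Y_{n+j})`: in the time-indexing of the paper,
the window of length `j + 1` that ends at time `-n` and grows into the past, exhausting
`past Y n`. -/
def windowFiltration (Y : ℕ → Ω → α) (hY : ∀ k, Measurable (Y k)) (n : ℕ) : Filtration ℕ mΩ where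
  seq j := ⨆ i ≤ j, MeasurableSpace.comap (Y (n + i)) inferInstance
  mono' _ _ hij := biSup_mono fun _ => ge_trans hij
  le' _ := iSup₂_le fun i _ => (hY (n + i)).comap_le

variable (hY : ∀ k, Measurable (Y k)) (n : ℕ)

theorem windowFiltration_zero :
    windowFiltration Y hY n 0 = MeasurableSpace.comap (Y n) inferInstance := by
  simp [windowFiltration]

theorem windowFiltration_succ (j : ℕ) :
    windowFiltration Y hY n (j + 1) =
      windowFiltration Y hY n j ⊔ MeasurableSpace.comap (Y (n + j + 1)) inferInstance :=
  Nat.iSup_le_succ (fun i => MeasurableSpace.comap (Y (n + i)) inferInstance) j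

theorem measurable_windowFiltration {i j : ℕ} (hij : i ≤ j) :
    Measurable[windowFiltration Y hY n j] (Y (n + i)) :=
  (comap_measurable (Y (n + i))).mono (le_iSup₂_of_le (f := fun i (_ : i ≤ j) =>
    MeasurableSpace.comap (Y (n + i)) inferInstance) i hij le_rfl) le_rfl

theorem past_le_iSup_windowFiltration : past Y n ≤ ⨆ j, windowFiltration Y hY n j := by
  refine iSup₂_le fun k hk => ?_
  obtain ⟨i, rfl⟩ := Nat.exists_eq_add_of_le hk
  exact (measurable_windowFiltration hY n le_rfl).comap_le.trans
    (le_iSup (fun j => windowFiltration Y hY n j) i)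

theorem measurable_prodN_windowFiltration {G : Type*} [MeasurableSpace G] [Mul G]
    [MeasurableMul₂ G] {N : ℕ → Ω → G} (hN : ∀ k, Measurable (N k)) (n j : ℕ) :
    Measurable[windowFiltration N hN n j] (prodN N n j) := by
  induction j with
  | zero => exact measurable_windowFiltration hN n le_rfl
  | succ j ih =>
    exact (ih.mono ((windowFiltration N hN n).mono j.le_succ) le_rfl).mul
      (measurable_windowFiltration hN n le_rfl)

theorem exists_measurable_windowFiltration_tendsto_lintegral_edist {P : Measure Ω}
    [IsFiniteMeasure P] {g : Ω → ℝ} (hg : Measurable[past Y n] g) (hg_int : Integrable g P) :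
    ∃ Z : ℕ → Ω → ℝ, (∀ j, Measurable[windowFiltration Y hY n j] (Z j)) ∧
      Tendsto (fun j => ∫⁻ ω, edist (g ω) (Z j ω) ∂P) atTop (𝓝 0) := by
  refine ⟨fun j => P[g | windowFiltration Y hY n j],
    fun j => stronglyMeasurable_condExp.measurable, ?_⟩
  have hlevy := hg_int.tendsto_eLpNorm_condExp (ℱ := windowFiltration Y hY n)
    (hg.mono (past_le_iSup_windowFiltration hY n) le_rfl).stronglyMeasurable
  simpa only [eLpNorm_one_eq_lintegral_enorm, Pi.sub_apply, ← edist_eq_enorm_sub, edist_comm]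
    using hlevy

end Past

namespace IsSolution

variable {Ω S G : Type*} [MeasurableSpace Ω] [MeasurableSpace S] [MeasurableSpace G]
  {P : Measure Ω} {μ : ℕ → Measure G} {X : ℕ → Ω → S} {N : ℕ → Ω → G}

theorem indep_windowFiltration [SMul G S] [IsZeroOrProbabilityMeasure P]
    (hsol : IsSolution P μ X N) (n j : ℕ) :
    Indep (windowFiltration N hsol.measurable_N n j)
      (past X (n + j + 1) ⊔ past N (n + j + 1)) P := by
  induction j with
  | zero => simpa only [windowFiltration_zero] using hsol.indep n
  | succ j ih =>
    rw [windowFiltration_succ]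
    exact indep_sup_left_of_indep_of_le ((windowFiltration N hsol.measurable_N n).le j)
      (hsol.measurable_N _).comap_le
      (sup_le (past_le hsol.measurable_X _) (past_le hsol.measurable_N _))
      ((comap_le_past le_rfl).trans le_sup_right)
      (sup_le_sup (past_antitone (Nat.le_succ _)) (past_antitone (Nat.le_succ _)))
      ih (hsol.indep _)

theorem ae_eq_prodN_smul [Semigroup G] [SMul G S] [IsScalarTower G G S]
    (hsol : IsSolution P μ X N) (n j : ℕ) :
    X n =ᵐ[P] fun ω => prodN N n j ω • X (n + j + 1) ω := by
  induction j with
  | zero => exact hsol.eqn n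
  | succ j ih =>
    filter_upwards [ih, hsol.eqn (n + j + 1)] with ω hX hX'
    rw [hX, hX', ← smul_assoc, smul_eq_mul]
    rfl

section Copies

variable [Semigroup G] [MeasurableMul₂ G] [SMul G S] [MeasurableSMul₂ G S] [IsScalarTower G G S]
  [IsProbabilityMeasure P] {T : Type*} [MeasurableSpace T] {a b : T → S} {n : ℕ}

theorem lintegral_edist_prodN_smul_le_two_mul (hsol : IsSolution P μ X N) {ν : Measure T}
    [SFinite ν] (ha : Measurable a) (hb : Measurable b) {j : ℕ}
    (hlaw_a : ν.map a = P.map (X (n + j + 1))) (hlaw_b : ν.map b = P.map (X (n + j + 1)))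
    {f : S → ℝ} (hf : Measurable f) {Z : Ω → ℝ}
    (hZ : Measurable[windowFiltration N hsol.measurable_N n j] Z) :
    ∫⁻ z, edist (f (prodN N n j z.1 • a z.2)) (f (prodN N n j z.1 • b z.2)) ∂(P.prod ν) ≤
      2 * ∫⁻ ω, edist (f (X n ω)) (Z ω) ∂P := by
  let W : Ω → G × ℝ := fun ω => (prodN N n j ω, Z ω)
  have hW : Measurable[windowFiltration N hsol.measurable_N n j] W :=
    (measurable_prodN_windowFiltration hsol.measurable_N n j).prodMk hZ
  have hWX : IndepFun W (X (n + j + 1)) P :=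
    (IndepFun_iff_Indep _ _ _).2 <| indep_of_indep_of_le (hsol.indep_windowFiltration n j)
      hW.comap_le ((comap_le_past le_rfl).trans le_sup_left)
  calc ∫⁻ z, edist (f (prodN N n j z.1 • a z.2)) (f (prodN N n j z.1 • b z.2)) ∂(P.prod ν)
      ≤ 2 * ∫⁻ ω, edist (f (prodN N n j ω • X (n + j + 1) ω)) (Z ω) ∂P :=
        lintegral_edist_le_two_mul_of_indepFun (F := fun p : (G × ℝ) × S => f (p.1.1 • p.2))
          (Z := Prod.snd) hWX (hW.mono ((windowFiltration N _ n).le j) le_rfl)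
          (hsol.measurable_X _) ha hb hlaw_a hlaw_b (by fun_prop) measurable_snd
    _ = 2 * ∫⁻ ω, edist (f (X n ω)) (Z ω) ∂P := by
        congr 1
        refine lintegral_congr_ae ?_
        filter_upwards [hsol.ae_eq_prodN_smul n j] with ω hX
        rw [hX]

variable {ν : ℕ → Measure T}

theorem tendsto_lintegral_edist_prodN_smul (hsol : IsSolution P μ X N) [∀ k, SFinite (ν k)]
    (ha : Measurable a) (hb : Measurable b) (hlaw_a : ∀ k, (ν k).map a = P.map (X k))
    (hlaw_b : ∀ k, (ν k).map b = P.map (X k)) {Y : Ω → S} (hY : Measurable[past N n] Y)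
    (hXY : X n =ᵐ[P] Y) {f : S → ℝ} (hf : Measurable f) (hf_int : Integrable (f ∘ Y) P) :
    Tendsto (fun j => ∫⁻ z, edist (f (prodN N n j z.1 • a z.2)) (f (prodN N n j z.1 • b z.2))
      ∂(P.prod (ν (n + j + 1)))) atTop (𝓝 0) := by
  obtain ⟨Z, hZ, hZ_lim⟩ := exists_measurable_windowFiltration_tendsto_lintegral_edist
    hsol.measurable_N n (hf.comp hY) hf_int
  have hX_lim : Tendsto (fun j => 2 * ∫⁻ ω, edist (f (X n ω)) (Z j ω) ∂P) atTop (𝓝 0) := by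
    have hX_eq (j : ℕ) :
        ∫⁻ ω, edist (f (X n ω)) (Z j ω) ∂P = ∫⁻ ω, edist ((f ∘ Y) ω) (Z j ω) ∂P := by
      refine lintegral_congr_ae ?_
      filter_upwards [hXY] with ω hω
      rw [hω, Function.comp_apply]
    simpa only [hX_eq, mul_zero] using
      ENNReal.Tendsto.const_mul hZ_lim (Or.inr ENNReal.ofNat_ne_top)
  exact tendsto_of_tendsto_of_tendsto_of_le_of_le tendsto_const_nhds hX_lim (fun _ => zero_le)
    fun j => hsol.lintegral_edist_prodN_smul_le_two_mul ha hb (hlaw_a _) (hlaw_b _) hf (hZ j)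

theorem not_exists_measurable_past_ae_eq_of_separated [TopologicalSpace S] [T35Space S]
    [OpensMeasurableSpace S] (hsol : IsSolution P μ X N) [∀ k, IsProbabilityMeasure (ν k)]
    (ha : Measurable a) (hb : Measurable b) (hlaw_a : ∀ k, (ν k).map a = P.map (X k))
    (hlaw_b : ∀ k, (ν k).map b = P.map (X k)) {K : Set (S × S)} (hK : IsCompact K)
    (hdiag : Disjoint K (Set.diagonal S)) (hsep : ∀ (σ : G) (t : T), (σ • a t, σ • b t) ∈ K) :
    ¬ ∃ Y : Ω → S, Measurable[past N n] Y ∧ X n =ᵐ[P] Y := by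
  rintro ⟨Y, hY, hXY⟩
  have hprod (j : ℕ) : Measurable (prodN N n j) :=
    (measurable_prodN_windowFiltration hsol.measurable_N n j).mono (Filtration.le _ j) le_rfl
  refine not_forall_tendsto_lintegral_edist_of_isCompact_of_disjoint_diagonal
    (ρ := fun j => P.prod (ν (n + j + 1)))
    (fun j => ((hprod j).comp measurable_fst).smul (ha.comp measurable_snd))
    (fun j => ((hprod j).comp measurable_fst).smul (hb.comp measurable_snd)) hK hdiag
    (fun j z => hsep (prodN N n j z.1) z.2) fun f => ?_
  have hf : Measurable fun s => (f s : ℝ) :=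
    (continuous_subtype_val.comp f.continuous).measurable
  have hf_int : Integrable (fun ω => (f (Y ω) : ℝ)) P :=
    .of_bound (hf.comp (hY.mono (past_le hsol.measurable_N n) le_rfl)).aestronglyMeasurable 1
      (ae_of_all _ fun ω => by simpa [abs_of_nonneg (f (Y ω)).2.1] using (f (Y ω)).2.2)
  exact hsol.tendsto_lintegral_edist_prodN_smul ha hb hlaw_a hlaw_b hY hXY hf hf_int

end Copies

end IsSolution

section Orbit

variable {S G : Type*} [MeasurableSpace S] [MeasurableSpace G] [SMul G S] [MeasurableSMul₂ G S]

theorem conv_dirac (ν : Measure G) [SFinite ν] (x : S) :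
    conv ν (Measure.dirac x) = ν.map (· • x) := by
  rw [conv, Measure.prod_dirac, Measure.map_map (by fun_prop) (by fun_prop)]
  rfl

theorem map_smul_smul_eq_conv_dirac_of_map_mul_right_eq [Semigroup G] [MeasurableMul G]
    [IsScalarTower G G S] {ν : Measure G} [SFinite ν] {h : G} (hinv : ν.map (· * h) = ν) (x : S) :
    ν.map (fun σ => σ • h • x) = conv ν (Measure.dirac x) := by
  rw [conv_dirac]
  conv_rhs => rw [← hinv, Measure.map_map (by fun_prop) (by fun_prop)]
  congr 1
  ext σ
  exact (smul_assoc σ h x).symm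

end Orbit

theorem disjoint_range_smul_prod_diagonal {G S : Type*} [SMul G S]
    (hcancel : ∀ σ : G, Function.Injective (σ • · : S → S)) {y z : S} (hyz : y ≠ z) :
    Disjoint (Set.range fun σ : G => (σ • y, σ • z)) (Set.diagonal S) :=
  Set.disjoint_left.2 fun _ ⟨σ, hσ⟩ hp => hyz (hcancel σ (by subst hσ; exact hp))

theorem tsirelson_P2'_nonsingleton_orbit_not_strong_general {Ω S G : Type*}
    [TopologicalSpace S] [T35Space S] [MeasurableSpace S] [OpensMeasurableSpace S]
    [TopologicalSpace G] [CompactSpace G] [MeasurableSpace G] [Semigroup G] [MeasurableMul₂ G]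
    [SMul G S] [ContinuousSMul G S] [MeasurableSMul₂ G S] [IsScalarTower G G S]
    [MeasurableSpace Ω] {P : Measure Ω} [IsProbabilityMeasure P] {μ : ℕ → Measure G}
    {X : ℕ → Ω → S} {N : ℕ → Ω → G} (hsol : IsSolution P μ X N) {H : Set G} {ν : ℕ → Measure G}
    [∀ k, IsProbabilityMeasure (ν k)] (hinv : ∀ k, ∀ h ∈ H, (ν k).map (· * h) = ν k)
    (hcancel : ∀ σ : G, Function.Injective (σ • · : S → S)) {x : S}
    (hlaw : ∀ k, P.map (X k) = conv (ν k) (Measure.dirac x))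
    (hHx : ¬ Set.Subsingleton ((fun h : G => h • x) '' H)) (n : ℕ) :
    ¬ ∃ Y : Ω → S, Measurable[past N n] Y ∧ X n =ᵐ[P] Y := by
  obtain ⟨_, ⟨h₁, hh₁, rfl⟩, _, ⟨h₂, hh₂, rfl⟩, hne⟩ := Set.not_subsingleton_iff.1 hHx
  have hcopy (h : G) (hh : h ∈ H) (k : ℕ) : (ν k).map (fun σ => σ • h • x) = P.map (X k) :=
    (map_smul_smul_eq_conv_dirac_of_map_mul_right_eq (hinv k h hh) x).trans (hlaw k).symm
  exact hsol.not_exists_measurable_past_ae_eq_of_separated (by fun_prop) (by fun_prop)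
    (hcopy h₁ hh₁) (hcopy h₂ hh₂) (isCompact_range (by fun_prop))
    (disjoint_range_smul_prod_diagonal hcancel hne)
    fun σ τ => ⟨σ * τ, by simp only [← smul_assoc, smul_eq_mul, mul_assoc]⟩

/-- Under (P2'), if `Σ` is left-cancellative and acts cancellatively on `S`,
an extremal solution whose marginals are `ν_k * δ_x` with `Hx` not a singleton is not strong. -/
theorem tsirelson_P2'_nonsingleton_orbit_not_strong
    {Ω : Type w} [MeasurableSpace Ω] (P : Measure Ω) [IsProbabilityMeasure P]
    (μ : ℕ → Measure G) (hμ : ∀ k, IsProbabilityMeasure (μ k))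
    (X : ℕ → Ω → S) (N : ℕ → Ω → G) (hsol : IsSolution P μ X N)
    (H : Set G) (ν : ℕ → Measure G) (hP2 : CondP2' P N H ν)
    (hleftcancel : ∀ σ τ₁ τ₂ : G, σ * τ₁ = σ * τ₂ → τ₁ = τ₂)
    (hcancelact : ∀ (σ : G) (x y : S), σ • x = σ • y → x = y)
    (hext : TailTrivial P fun k => past X k ⊔ past N k)
    (x : S) (hlaw : ∀ k, P.map (X k) = conv (ν k) (Measure.dirac x))
    (hHx : ¬ Set.Subsingleton ((fun h : G => h • x) '' H)) :
    ¬ IsStrong P X N := by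
  have := hP2.prob_ν
  exact fun hstrong => tsirelson_P2'_nonsingleton_orbit_not_strong_general hsol
    hP2.right_invariant (fun σ y z => hcancelact σ y z) hlaw hHx 0 (hstrong 0)

end Tsirelson
end
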